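/- On the event E, assume Condition (H) with the dataset in the sparse-unlearnable regime and Γ ≥ Cd, and run adversarial distillation under a Good Teacher for a horizon T satisfying T_0 + m^{2/3}·log(T_max)/(η α²) ≤ T ≤ T_max, where T_max := N/(1000·η·mP·σ_0⁴σ_n⁶d³·log²(16NmP/δ)). Then: (1) there exists a filter r ∈ [m] with w_{r,1}^{(T)} ≥ C_0/(α m^{1/3}); (2) every noise response remains at initialization scale: |⟨w_r^{(T)}, x_{i,j}⟩| ≤ 4σ_0σ_n√(d·log(16NmP/δ)) for all r ∈ [m], i ∈ [N], j ≠ s(X_i); (3) the robust training error is o(1); and (4) the robust test error on the learnable test distribution satisfies L^rob(f_{W^{(T)}}) = o(1). -/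

import Mathlib

open Finset MeasureTheory ProbabilityTheory
open scoped ENNReal NNReal

noncomputable section

namespace AD

/-- Cubic ReLU activation. -/
def phi (z : ℝ) : ℝ := (max 0 z) ^ 3

/-- Negative sigmoid `ψ(z) = 1/(1+e^z)`. -/
def psi (z : ℝ) : ℝ := 1 / (1 + Real.exp z)

/-- Logistic loss `ℓ(z) = log(1+e^{-z})`. -/
def lloss (z : ℝ) : ℝ := Real.log (1 + Real.exp (-z))

/-- Logistic sigmoid `σ(z) = 1/(1+e^{-z})`. -/
def sigm (z : ℝ) : ℝ := 1 / (1 + Real.exp (-z))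

/-- Euclidean inner product on `Fin d → ℝ`. -/
def dot {d : ℕ} (a b : Fin d → ℝ) : ℝ := ∑ k, a k * b k

/-- Squared Euclidean norm. -/
def sqnorm {d : ℕ} (a : Fin d → ℝ) : ℝ := dot a a

/-- First standard basis vector `e₁` (the learnable feature `u`). -/
def e1 (d : ℕ) (hd : 0 < d) : Fin d → ℝ := fun k => if k = (⟨0, hd⟩ : Fin d) then 1 else 0

/-- Last standard basis vector `e_d` (the unlearnable feature `v`). -/
def eLast (d : ℕ) (_hd : 0 < d) : Fin d → ℝ := fun k => if (k : ℕ) = d - 1 then 1 else 0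

/-- The two-layer student network
`f_W(X) = ∑_r ∑_p [φ(⟨w_r,x_p⟩) − φ(−⟨w_r,x_p⟩)]`. -/
def netOut {m P d : ℕ} (w : Fin m → Fin d → ℝ) (X : Fin P → Fin d → ℝ) : ℝ :=
  ∑ r, ∑ p, (phi (dot (w r) (X p)) - phi (-(dot (w r) (X p))))

/-- The concentration event `E` of the paper, i.e. properties (P1)–(P8), stated for
training patches `x`, initialization `w0`, labels `y` and signal-patch indices `sig`. -/
def EventEOn (N m P d : ℕ) (hd : 0 < d) (sigman sigma0 delta : ℝ)
    (y : Fin N → ℝ) (sig : Fin N → Fin P)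
    (x : Fin N → Fin P → Fin d → ℝ) (w0 : Fin m → Fin d → ℝ) : Prop :=
  -- (P1) noise-patch norms
  (∀ i j, j ≠ sig i →
      sigman ^ 2 * d / 2 ≤ sqnorm (x i j) ∧ sqnorm (x i j) ≤ 3 * sigman ^ 2 * d / 2) ∧
  -- (P2) pairwise noise inner products
  (∀ i k j q, j ≠ sig i → q ≠ sig k → ((i, j) : Fin N × Fin P) ≠ (k, q) →
      |dot (x i j) (x k q)| ≤
        2 * sigman ^ 2 * Real.sqrt ((d : ℝ) * Real.log ((16 : ℝ) * N ^ 2 * P ^ 2 / delta))) ∧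
  -- (P3) sup-norm of noise patches
  (∀ i j, j ≠ sig i → ∀ kk : Fin d,
      |x i j kk| ≤ sigman * Real.sqrt (2 * Real.log ((16 : ℝ) * d * N * P / delta))) ∧
  -- (P4) initialization norms
  (∀ r, Real.sqrt (sqnorm (w0 r)) ≤ 2 * sigma0 * Real.sqrt d) ∧
  -- (P5) initialization signal correlation
  (∀ r, |dot (w0 r) (e1 d hd)| ≤ sigma0 * Real.sqrt (2 * Real.log ((16 : ℝ) * m / delta))) ∧
  -- (P6) initialization noise correlations
  (∀ r i j, j ≠ sig i →
      |dot (w0 r) (x i j)| ≤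
        2 * sigma0 * sigman * Real.sqrt ((d : ℝ) * Real.log ((16 : ℝ) * N * m * P / delta))) ∧
  -- (P7) maximal initial signal alignment
  (∃ r, sigma0 / 2 ≤ dot (w0 r) (e1 d hd)) ∧
  -- (P8) maximal initial noise alignment
  (∀ i j, j ≠ sig i → ∃ r, sigma0 * sigman * Real.sqrt d / 4 ≤ y i * dot (w0 r) (x i j))
structure Setting where
  N : ℕ
  m : ℕ
  P : ℕ
  d : ℕ
  T : ℕ
  hN : 0 < N
  hm : 0 < m
  hP : 0 < P
  hd : 0 < d
  alpha : ℝ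
  sigman : ℝ
  sigma0 : ℝ
  eta : ℝ
  eps : ℝ
  delta : ℝ
  halpha : 0 < alpha
  hsigman : 0 < sigman
  hsigma0 : 0 < sigma0
  heta : 0 < eta
  heps : 0 < eps
  hepsalpha : eps < alpha
  hdelta0 : 0 < delta
  hdelta1 : delta < 1
  /-- labels -/
  y : Fin N → ℝ
  hy : ∀ i, y i = 1 ∨ y i = -1
  /-- signal patch index -/
  sig : Fin N → Fin P
  /-- learnable samples -/
  SL : Finset (Fin N)
  /-- unlearnable samples -/
  SU : Finset (Fin N)
  hunion : SL ∪ SU = Finset.univ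
  hdisj : Disjoint SL SU
  /-- training patches -/
  x : Fin N → Fin P → Fin d → ℝ
  hsigL : ∀ i ∈ SL, x i (sig i) = (alpha * y i) • e1 d hd
  hsigU : ∀ i ∈ SU, x i (sig i) = (alpha * y i) • eLast d hd
  hnoiseU : ∀ i j, j ≠ sig i → dot (x i j) (e1 d hd) = 0
  hnoiseV : ∀ i j, j ≠ sig i → dot (x i j) (eLast d hd) = 0
  /-- weight trajectory -/
  w : ℕ → Fin m → Fin d → ℝ
  hwperp : ∀ t r, dot (w t r) (eLast d hd) = 0
  /-- adversarial training examples at each iteration -/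
  xadv : ℕ → Fin N → Fin P → Fin d → ℝ
  hadvnoise : ∀ t i j, j ≠ sig i → xadv t i j = x i j
  hadvspan : ∀ t i, ∃ c : ℝ, xadv t i (sig i) - x i (sig i) = c • x i (sig i)
  hadvlinf : ∀ t i p k, |xadv t i p k - x i p k| ≤ eps
  hadvlearn : ∀ t : ℕ, ∀ i ∈ SL,
    alpha - eps ≤ y i * dot (xadv t i (sig i)) (e1 d hd) ∧
      y i * dot (xadv t i (sig i)) (e1 d hd) ≤ alpha

namespace Setting

variable (S : Setting)

/-- Adversarial margin `y_i f_{W^{(t)}}(X̃_i^{(t)})`. -/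
def marg (t : ℕ) (i : Fin S.N) : ℝ := S.y i * netOut (S.w t) (S.xadv t i)

/-- Signal coordinate `w_{r,1}^{(t)}`. -/
def wsig (t : ℕ) (r : Fin S.m) : ℝ := S.w t r ⟨0, S.hd⟩

/-- Unlearnable fraction `p_un = |S_U|/N`. -/
def pun : ℝ := (S.SU.card : ℝ) / S.N

/-- The adversarial-training gradient-descent dynamics. -/
def ATDyn : Prop :=
  ∀ t r, S.w (t + 1) r = S.w t r +
    (3 * S.eta / S.N) •
      ∑ i : Fin S.N, (psi (S.marg t i) * S.y i) •
        ∑ p : Fin S.P, (dot (S.w t r) (S.xadv t i p)) ^ 2 • S.xadv t i p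

/-- The signed gradient weight of sample `i` at iteration `t` under adversarial
distillation from teacher logits `fT`. -/
def gAD (fT : Fin S.N → ℝ) (t : ℕ) (i : Fin S.N) : ℝ :=
  sigm (S.y i * fT i) * psi (S.marg t i) - sigm (-(S.y i * fT i)) * psi (-(S.marg t i))

/-- The adversarial-distillation gradient-descent dynamics. -/
def ADDyn (fT : Fin S.N → ℝ) : Prop :=
  ∀ t r, S.w (t + 1) r = S.w t r +
    (3 * S.eta / S.N) •
      ∑ i : Fin S.N, (S.gAD fT t i * S.y i) •
        ∑ p : Fin S.P, (dot (S.w t r) (S.xadv t i p)) ^ 2 • S.xadv t i p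

/-- Noise coefficients `ρ_{i,j,r}^{(t)}` (adversarial training). -/
def rho (i : Fin S.N) (j : Fin S.P) (r : Fin S.m) : ℕ → ℝ
  | 0 => 0
  | t + 1 => rho i j r t + (3 * S.eta / S.N) * psi (S.marg t i) * (dot (S.w t r) (S.x i j)) ^ 2

/-- Noise coefficients under adversarial distillation. -/
def rhoAD (fT : Fin S.N → ℝ) (i : Fin S.N) (j : Fin S.P) (r : Fin S.m) : ℕ → ℝ
  | 0 => 0
  | t + 1 => rhoAD fT i j r t + (3 * S.eta / S.N) * S.gAD fT t i * (dot (S.w t r) (S.x i j)) ^ 2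

/-- The event `E` for a setting. -/
def EventE : Prop :=
  EventEOn S.N S.m S.P S.d S.hd S.sigman S.sigma0 S.delta S.y S.sig S.x (S.w 0)

/-- Condition (H): the parameter requirements of Condition 4.1 of the paper
(without the unlearnable-fraction regime item, which is imposed separately). -/
def CondH (C : ℝ) : Prop :=
  1 ≤ C ∧
  -- training horizon
  C * S.N / (S.eta * S.sigma0 * S.sigman ^ 3 * ((S.d : ℝ) * Real.sqrt S.d)) ≤ (S.T : ℝ) ∧
  -- dimension
  C * S.m ^ 2 * S.P ^ 2 * S.N ^ 2 *
      (Real.log ((S.T : ℝ) * S.N * S.m * S.P / S.delta)) ^ 4 ≤ (S.d : ℝ) ∧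
  -- signal strength
  C * S.sigman * Real.sqrt S.d * Real.log ((S.T : ℝ) * S.N * S.m * S.P / S.delta) /
      (((S.N : ℝ) * (1 - S.pun)) ^ ((1 : ℝ) / 3)) ≤ S.alpha ∧
  -- initialization scale
  S.sigma0 ≤
    C⁻¹ *
        min (min (1 / ((S.m : ℝ) ^ ((2 : ℝ) / 3) * (S.P : ℝ) ^ ((2 : ℝ) / 3) *
            S.sigman * Real.sqrt S.d))
          (1 / (S.alpha * (S.m : ℝ) ^ ((2 : ℝ) / 3))))
          (1 / (S.sigman * S.m ^ 2 * Real.sqrt S.P * S.d)) /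
      Real.log ((S.T : ℝ) * S.d * S.N * S.m * S.P / S.delta) ∧
  -- learning rate
  S.eta ≤
    C⁻¹ * min (min (1 / (S.alpha ^ 3 * S.sigma0)) (1 / (S.sigman ^ 2 * S.d))) (1 / S.alpha ^ 2) /
      Real.log ((S.T : ℝ) * S.N * S.m * S.P / S.delta) ∧
  -- adversarial budget
  C * S.sigman * S.m * Real.sqrt S.P * Real.log ((S.T : ℝ) * S.d * S.N * S.P / S.delta) ≤ S.eps ∧
  S.eps < C⁻¹ * min S.alpha (1 / (S.m * S.sigma0 * S.d)) ∧
  -- width and number of patches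
  C * Real.log ((S.N : ℝ) * S.P / S.delta) ≤ (S.m : ℝ) ∧
  (S.m : ℝ) ≤ C * Real.log S.d ^ C ∧
  2 ≤ S.P ∧ (S.P : ℝ) ≤ C

/-- The sparse-unlearnable regime of Condition 4.1. -/
def SparseRegime (C : ℝ) : Prop :=
  C / S.N ≤ S.pun ∧ S.pun ≤ C⁻¹ * Real.log S.d / S.N ∧
  C * S.m * S.P * Real.log ((S.T : ℝ) * S.d * S.N * S.m * S.P / S.delta) ≤ (S.N : ℝ)

/-- The noise-stability bound (NS) on learnable samples at iteration `t`. -/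
def NS (t : ℕ) : Prop :=
  ∀ r : Fin S.m, ∀ i ∈ S.SL, ∀ j, j ≠ S.sig i →
    |dot (S.w t r) (S.x i j)| ≤
      3 * S.sigma0 * S.sigman *
          Real.sqrt ((S.d : ℝ) * Real.log ((16 : ℝ) * S.N * S.m * S.P / S.delta)) +
        21 * S.pun * S.N * S.P * Real.log S.T ^ ((1 : ℝ) / 3) / Real.sqrt S.d *
          Real.sqrt (Real.log ((16 : ℝ) * S.N ^ 2 * S.P ^ 2 / S.delta))

/-- The signal-learning hitting time `T₀`. -/
def T0 (C0 : ℝ) : ℕ :=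
  sInf {t : ℕ | ∃ r, C0 / (S.alpha * (S.m : ℝ) ^ ((1 : ℝ) / 3)) < S.wsig t r}

/-- Maximum of the noise coefficients over unlearnable noise patches. -/
def rhoMaxSU (t : ℕ) : ℝ :=
  sSup {z : ℝ | ∃ r : Fin S.m, ∃ k ∈ S.SU, ∃ q, q ≠ S.sig k ∧ z = S.rho k q r t}

/-- Shifted noise coefficients `ρ̂_{i,j,r}^{(t)}`. -/
def rhoHat (i : Fin S.N) (j : Fin S.P) (r : Fin S.m) (t : ℕ) : ℝ :=
  S.rho i j r t + S.y i * dot (S.w 0 r) (S.x i j) / sqnorm (S.x i j)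

/-- Maximum shifted noise coefficient over unlearnable noise patches. -/
def rhoHatMax (t : ℕ) : ℝ :=
  sSup {z : ℝ | ∃ r : Fin S.m, ∃ k ∈ S.SU, ∃ q, q ≠ S.sig k ∧ z = S.rhoHat k q r t}

/-- The noise-memorization hitting time `T₁`. -/
def T1 (C1 : ℝ) : ℕ :=
  sInf {t : ℕ | C1 / (((S.m : ℝ) * S.P) ^ ((1 : ℝ) / 3) * S.sigman ^ 2 * S.d) < S.rhoHatMax t}

/-- The Good-Teacher horizon `T_max`. -/
def Tmax : ℝ :=
  S.N / (1000 * S.eta * S.m * S.P * S.sigma0 ^ 4 * S.sigman ^ 6 * (S.d : ℝ) ^ 3 *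
    Real.log ((16 : ℝ) * S.N * S.m * S.P / S.delta) ^ 2)

end Setting
/-- Law of the label: uniform on `{+1, −1}`. -/
def labelLaw : Measure ℝ :=
  ((2 : ℝ≥0∞)⁻¹ • Measure.dirac (1 : ℝ)) + ((2 : ℝ≥0∞)⁻¹ • Measure.dirac (-1 : ℝ))

/-- Law of a single coordinate of a noise patch: `N(0, σ_n²)` off the feature
subspace coordinates, `δ₀` on coordinates `1` and `d`. -/
def noiseCoordLaw (sigman : ℝ) (d : ℕ) (k : Fin d) : Measure ℝ :=
  if (k : ℕ) = 0 ∨ (k : ℕ) = d - 1 then Measure.dirac 0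
  else gaussianReal 0 ⟨sigman ^ 2, sq_nonneg _⟩

/-- Law of a noise patch: `N(0, σ_n²(I_d − Π_F))`. -/
def noisePatchLaw (sigman : ℝ) (d : ℕ) : Measure (Fin d → ℝ) :=
  Measure.pi (noiseCoordLaw sigman d)

/-- Uniform law of the signal-patch index. -/
def uniformPatch (P : ℕ) (hP : 0 < P) : Measure (Fin P) :=
  (@PMF.uniformOfFintype (Fin P) _ ⟨⟨0, hP⟩⟩).toMeasure

/-- The learnable test distribution `D_L`: uniform label, uniform signal-patch index,
signal patch `α y u`, independent Gaussian noise patches. -/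
def testLaw (alpha sigman : ℝ) (P d : ℕ) (hP : 0 < P) (hd : 0 < d) :
    Measure ((Fin P → Fin d → ℝ) × ℝ) :=
  Measure.map
    (fun z : ℝ × Fin P × (Fin P → Fin d → ℝ) =>
      (Function.update z.2.2 z.2.1 ((alpha * z.1) • e1 d hd), z.1))
    ((labelLaw).prod ((uniformPatch P hP).prod (Measure.pi fun _ : Fin P => noisePatchLaw sigman d)))

/-- Robust test error of the student at iteration `t` on the learnable test
distribution `D_L`. -/
def Setting.robErr (S : Setting) (t : ℕ) : ℝ≥0∞ :=
  testLaw S.alpha S.sigman S.P S.d S.hP S.hd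
    {Xy : (Fin S.P → Fin S.d → ℝ) × ℝ |
      ∃ Δ : Fin S.P → Fin S.d → ℝ, (∀ p k, |Δ p k| ≤ S.eps) ∧
        Xy.2 * netOut (S.w t) (fun p => Xy.1 p + Δ p) < 0}

/-!
Along the first coordinate the perturbed training samples are multiples of `u` or have no `u` part,
so the signal alignments `A_r = α w_{r,1}` follow the closed recursion `A_r ↦ A_r + H_t A_r²`, where
`H_t` depends on the iteration but not on the filter. As long as the noise responses stay small,
the margin of a learnable sample is `F = ∑ A_r³` up to a factor close to one, and a learnable sample
taught with a large margin has gradient weight between about `e^{-F}` and `e^{-15F/16}`. Hence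
`exp (F / 2)` grows at most linearly in time, while telescoping `1 / A_r` bounds the sum of the
steps `H_t` once one filter is large. The accumulated gradient weights are therefore
bounded, on unlearnable samples because a Good Teacher gives them weight
`1/2 - sigmoid (margin)`, which is cubic in the noise responses. The drift of a noise response is at
most this accumulated weight times the correlations between noise patches, which closes the
induction.

In the end `F` exceeds any prescribed constant, while the filters remain small in `ℓ¹` away from the
first coordinate. So the clean signal dominates both an `ℓ∞` perturbation and, by Markov's
inequality, fresh noise.
-/

/-! ### The logistic function -/

lemma psi_eq_sigmoid_neg (z : ℝ) : psi z = Real.sigmoid (-z) := by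
  rw [psi, Real.sigmoid_def, neg_neg, one_div]

lemma sigm_eq_sigmoid (z : ℝ) : sigm z = Real.sigmoid z := by
  rw [sigm, Real.sigmoid_def, one_div]

lemma sigmoid_le_exp (x : ℝ) : Real.sigmoid x ≤ Real.exp x := by
  rw [Real.sigmoid_def, ← inv_inv (Real.exp x), ← Real.exp_neg]
  exact inv_anti₀ (Real.exp_pos _) (by linarith)

lemma exp_le_five_quarters {z : ℝ} (hz : z ≤ 1 / 25) : Real.exp z ≤ 5 / 4 := by
  have hexp := (abs_le.1 (Real.abs_exp_sub_one_sub_id_le (x := 1 / 25) (by norm_num [abs_le]))).2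
  linarith [Real.exp_le_exp.2 hz]

lemma half_exp_le_sigmoid {x : ℝ} (hx : x ≤ 0) : Real.exp x / 2 ≤ Real.sigmoid x := by
  have hone : 1 ≤ Real.exp (-x) := Real.one_le_exp (by linarith)
  calc Real.exp x / 2 = (2 * Real.exp (-x))⁻¹ := by rw [Real.exp_neg]; field_simp
    _ ≤ Real.sigmoid x := inv_anti₀ (by positivity) (by linarith)

lemma lipschitzWith_sigmoid : LipschitzWith (1 / 4) Real.sigmoid := by
  refine lipschitzWith_of_nnnorm_deriv_le differentiable_sigmoid fun x => ?_
  rw [← NNReal.coe_le_coe, coe_nnnorm, Real.deriv_sigmoid, Real.norm_eq_abs, abs_of_nonneg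
    (mul_nonneg (Real.sigmoid_nonneg x) (sub_nonneg.2 (Real.sigmoid_le_one x)))]
  push_cast
  nlinarith [sq_nonneg (Real.sigmoid x - 1 / 2)]

lemma abs_half_sub_sigmoid_le (x : ℝ) : |1 / 2 - Real.sigmoid x| ≤ |x| / 4 := by
  have h := lipschitzWith_sigmoid.dist_le_mul 0 x
  rw [Real.dist_eq, Real.dist_eq, Real.sigmoid_zero, zero_sub, abs_neg] at h
  push_cast at h
  rw [one_div]
  linarith

lemma lloss_le_exp_neg (z : ℝ) : lloss z ≤ Real.exp (-z) := by
  have h := Real.log_le_sub_one_of_pos (show 0 < 1 + Real.exp (-z) by positivity)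
  rw [lloss]
  linarith

/-! ### The cubic recursion `a ↦ a + H a²` -/

section CubicRecursion

variable {ι : Type*} [Fintype ι]

/-- The sum of cubes of a family of signal alignments. For the student network it is the
contribution of a unit signal patch to the margin, since the activation acts as `z ↦ z³`. -/
def cubeSum (A : ι → ℝ) : ℝ := ∑ r, A r ^ 3

lemma cubeSum_mono : Monotone (cubeSum : (ι → ℝ) → ℝ) := fun _ _ hAB =>
  Finset.sum_le_sum fun r _ => (show Odd 3 by decide).strictMono_pow.monotone (hAB r)

lemma abs_pow_three_le_of_neg_le {x a : ℝ} (hx : -a ≤ x) (ha : 0 ≤ a) :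
    |x| ^ 3 ≤ x ^ 3 + 2 * a ^ 3 := by
  have ha3 := pow_nonneg ha 3
  rcases le_total 0 x with h | h
  · rw [abs_of_nonneg h]
    linarith
  · rw [abs_of_nonpos h, Odd.neg_pow (by decide)]
    have : (-x) ^ 3 ≤ a ^ 3 := pow_le_pow_left₀ (by linarith) (by linarith) 3
    rw [Odd.neg_pow (by decide)] at this
    linarith

lemma sum_abs_pow_three_le {A : ι → ℝ} {a : ℝ} (ha : 0 ≤ a) (hA : ∀ r, -a ≤ A r) :
    ∑ r, |A r| ^ 3 ≤ cubeSum A + 2 * (Fintype.card ι * a ^ 3) := by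
  calc ∑ r, |A r| ^ 3 ≤ ∑ r, (A r ^ 3 + 2 * a ^ 3) :=
        Finset.sum_le_sum fun r _ => abs_pow_three_le_of_neg_le (hA r) ha
    _ = cubeSum A + 2 * (Fintype.card ι * a ^ 3) := by
        rw [Finset.sum_add_distrib, Finset.sum_const, Finset.card_univ, nsmul_eq_mul, cubeSum]
        ring

lemma exists_le_of_one_le_cubeSum {A : ι → ℝ} {μ : ℝ} (hμ : μ ^ 3 = Fintype.card ι)
    (hA : 1 ≤ cubeSum A) : ∃ r, 1 / μ ≤ A r := by
  rcases isEmpty_or_nonempty ι with hι | hι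
  · norm_num [cubeSum] at hA
  by_contra! hlt
  have hsum : cubeSum A < ∑ _r : ι, (1 / μ) ^ 3 :=
    Finset.sum_lt_sum_of_nonempty Finset.univ_nonempty fun r _ =>
      (show Odd 3 by decide).strictMono_pow (hlt r)
  rw [Finset.sum_const, Finset.card_univ, nsmul_eq_mul, div_pow, one_pow, hμ,
    mul_one_div_cancel (by positivity)] at hsum
  linarith

section Step

variable {A : ι → ℝ} (hA : ∑ r, |A r| ^ 3 ≤ cubeSum A + 1 / 50)
include hA

lemma neg_le_cubeSum : -(1 / 50) ≤ cubeSum A := by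
  have : 0 ≤ ∑ r, |A r| ^ 3 := Finset.sum_nonneg fun _ _ => by positivity
  linarith

lemma abs_le_cubeSum_add (r : ι) : |A r| ≤ cubeSum A + 51 / 50 := by
  have hsingle : |A r| ^ 3 ≤ ∑ r, |A r| ^ 3 :=
    Finset.single_le_sum (f := fun r => |A r| ^ 3) (fun _ _ => by positivity) (Finset.mem_univ r)
  have hcube : |A r| ≤ |A r| ^ 3 + 1 := by
    nlinarith [mul_nonneg (abs_nonneg (A r)) (sq_nonneg (|A r| - 1)), sq_nonneg (|A r| - 1)]
  linarith

lemma abs_mul_le_of_le_exp {h H : ℝ} (hh : h ≤ 1 / 500) (hH0 : 0 ≤ H)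
    (hH : H ≤ 4 * h * Real.exp (-(9 / 10 * cubeSum A))) (r : ι) : |H * A r| ≤ 1 / 10 := by
  have hcancel : Real.exp (-(9 / 10 * cubeSum A)) * Real.exp (9 / 10 * cubeSum A) = 1 := by
    rw [← Real.exp_add, neg_add_cancel, Real.exp_zero]
  have habs : |A r| ≤ 12 / 10 * Real.exp (9 / 10 * cubeSum A) := by
    linarith [abs_le_cubeSum_add hA r, neg_le_cubeSum hA,
      Real.add_one_le_exp (9 / 10 * cubeSum A)]
  calc |H * A r| = H * |A r| := by rw [abs_mul, abs_of_nonneg hH0]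
    _ ≤ (4 * h * Real.exp (-(9 / 10 * cubeSum A))) *
          (12 / 10 * Real.exp (9 / 10 * cubeSum A)) := by gcongr; exact hH0.trans hH
    _ = 48 / 10 * h * (Real.exp (-(9 / 10 * cubeSum A)) * Real.exp (9 / 10 * cubeSum A)) := by
        ring
    _ ≤ 1 / 10 := by rw [hcancel]; linarith

omit hA in
lemma add_mul_sq_pow_three_le {x H b : ℝ} (hx : |x| ≤ b) (hH : 0 ≤ H) (hHx : |H * x| ≤ 1 / 10) :
    (x + H * x ^ 2) ^ 3 ≤ x ^ 3 + 4 * H * (b * |x| ^ 3) := by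
  obtain ⟨hlow, hup⟩ := abs_le.1 hHx
  have hfactor : 3 + 3 * (H * x) + (H * x) ^ 2 ≤ 4 := by nlinarith
  have hfourth : x ^ 4 ≤ b * |x| ^ 3 := by
    calc x ^ 4 = |x| * |x| ^ 3 := by rw [← pow_succ', (show Even 4 by decide).pow_abs]
      _ ≤ b * |x| ^ 3 := by gcongr
  calc (x + H * x ^ 2) ^ 3 = x ^ 3 + (3 + 3 * (H * x) + (H * x) ^ 2) * (H * x ^ 4) := by ring
    _ ≤ x ^ 3 + 4 * (H * (b * |x| ^ 3)) := by gcongr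
    _ = x ^ 3 + 4 * H * (b * |x| ^ 3) := by ring

lemma cubeSum_add_smul_sq_le {H : ℝ} (hH : 0 ≤ H) (hHA : ∀ r, |H * A r| ≤ 1 / 10) :
    cubeSum (A + H • A ^ 2) ≤ cubeSum A + 4 * H * (cubeSum A + 51 / 50) ^ 2 := by
  have hnonneg : 0 ≤ cubeSum A + 51 / 50 := by linarith [neg_le_cubeSum hA]
  calc cubeSum (A + H • A ^ 2)
      ≤ ∑ r, (A r ^ 3 + 4 * H * ((cubeSum A + 51 / 50) * |A r| ^ 3)) :=
        Finset.sum_le_sum fun r _ =>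
          add_mul_sq_pow_three_le (abs_le_cubeSum_add hA r) hH (hHA r)
    _ = cubeSum A + 4 * H * ((cubeSum A + 51 / 50) * ∑ r, |A r| ^ 3) := by
        rw [Finset.sum_add_distrib, ← Finset.mul_sum, ← Finset.mul_sum, ← cubeSum]
    _ ≤ cubeSum A + 4 * H * (cubeSum A + 51 / 50) ^ 2 := by
        rw [sq]
        gcongr
        linarith

end Step

lemma sq_add_le_exp {F c : ℝ} (hF : -(1 / 50) ≤ F) (hc : 1 / 5 ≤ c) (hc' : c ≤ 9 / 20) :
    (F + 51 / 50) ^ 2 ≤ 27 * Real.exp (2 * c * F) := by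
  have hlin : F + 51 / 50 ≤ 51 / 10 * Real.exp (c * F) := by
    nlinarith [Real.add_one_le_exp (c * F)]
  calc (F + 51 / 50) ^ 2 ≤ (51 / 10 * Real.exp (c * F)) ^ 2 :=
        pow_le_pow_left₀ (by linarith) hlin 2
    _ = 2601 / 100 * Real.exp (2 * c * F) := by
        rw [mul_pow, ← Real.exp_nat_mul]; push_cast; ring_nf
    _ ≤ 27 * Real.exp (2 * c * F) := by gcongr; norm_num

lemma exp_half_add_le {F D B : ℝ} (hD0 : 0 ≤ D) (hD1 : D ≤ 1) (hB : Real.exp (F / 2) * D ≤ B) :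
    Real.exp ((F + D) / 2) ≤ Real.exp (F / 2) + B := by
  have hexp : Real.exp (D / 2) ≤ 1 + D := by
    have h := Real.abs_exp_sub_one_sub_id_le (x := D / 2) (by rw [abs_of_nonneg] <;> linarith)
    nlinarith [(abs_le.1 h).2]
  calc Real.exp ((F + D) / 2) = Real.exp (F / 2) * Real.exp (D / 2) := by
        rw [add_div, Real.exp_add]
    _ ≤ Real.exp (F / 2) * (1 + D) := by gcongr
    _ ≤ Real.exp (F / 2) + B := by linarith

lemma exp_half_cubeSum_step_le {A : ι → ℝ} (hA : ∑ r, |A r| ^ 3 ≤ cubeSum A + 1 / 50) {h H : ℝ}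
    (hh0 : 0 ≤ h) (hh : h ≤ 1 / 500) (hH0 : 0 ≤ H)
    (hH : H ≤ 4 * h * Real.exp (-(9 / 10 * cubeSum A))) :
    Real.exp (cubeSum (A + H • A ^ 2) / 2) ≤ Real.exp (cubeSum A / 2) + 432 * h := by
  have hstep := cubeSum_add_smul_sq_le hA hH0 (abs_mul_le_of_le_exp hA hh hH0 hH)
  have hF := neg_le_cubeSum hA
  generalize cubeSum A = F at hH hF hstep ⊢
  have hcoef : 4 * H ≤ 16 * h * Real.exp (-(9 / 10 * F)) := by linarith
  have hpot : Real.exp (F / 2) * (4 * H * (F + 51 / 50) ^ 2) ≤ 432 * h := by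
    have hexp : Real.exp (-(9 / 10 * F)) * Real.exp (2 * (1 / 5) * F) = Real.exp (-(F / 2)) := by
      rw [← Real.exp_add]; ring_nf
    calc Real.exp (F / 2) * (4 * H * (F + 51 / 50) ^ 2)
        ≤ Real.exp (F / 2) * (16 * h * Real.exp (-(9 / 10 * F)) *
            (27 * Real.exp (2 * (1 / 5) * F))) := by
          gcongr
          exact sq_add_le_exp hF le_rfl (by norm_num)
      _ = 432 * h * (Real.exp (F / 2) *
            (Real.exp (-(9 / 10 * F)) * Real.exp (2 * (1 / 5) * F))) := by ring
      _ = 432 * h := by rw [hexp, ← Real.exp_add, add_neg_cancel, Real.exp_zero, mul_one]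
  have hinc : 4 * H * (F + 51 / 50) ^ 2 ≤ 1 := by
    calc 4 * H * (F + 51 / 50) ^ 2
        ≤ 16 * h * Real.exp (-(9 / 10 * F)) * (27 * Real.exp (2 * (9 / 20) * F)) := by
          gcongr
          exact sq_add_le_exp hF (by norm_num) le_rfl
      _ = 432 * h * (Real.exp (-(9 / 10 * F)) * Real.exp (2 * (9 / 20) * F)) := by ring
      _ = 432 * h := by rw [← Real.exp_add]; ring_nf; rw [Real.exp_zero, mul_one]
      _ ≤ 1 := by linarith
  calc Real.exp (cubeSum (A + H • A ^ 2) / 2)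
      ≤ Real.exp ((F + 4 * H * (F + 51 / 50) ^ 2) / 2) := by gcongr
    _ ≤ Real.exp (F / 2) + 432 * h := exp_half_add_le (by positivity) hinc hpot

/-- A trajectory of the cubic recursion `A (s + 1) = A s + H s • A s ^ 2` over `n` steps. The
step sizes `H` are comparable to `h * exp (-cubeSum (A s))`; the lower comparison is only required
while `exp (cubeSum (A s) / 2) ≤ U`, a bound which the trajectory then never leaves. -/
structure SignalPath (A : ℕ → ι → ℝ) (H : ℕ → ℝ) (n : ℕ) (a h U : ℝ) : Prop where
  a_nonneg : 0 ≤ a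
  card_mul_le : Fintype.card ι * a ^ 3 ≤ 1 / 100
  abs_init_le : ∀ r, |A 0 r| ≤ a
  step : ∀ s < n, A (s + 1) = A s + H s • A s ^ 2
  h_pos : 0 < h
  h_le : h ≤ 1 / 500
  horizon : 2 + 432 * h * n ≤ U
  upper : ∀ s < n, -(1 / 50) ≤ cubeSum (A s) → H s ≤ 4 * h * Real.exp (-(9 / 10 * cubeSum (A s)))
  lower : ∀ s < n, -(1 / 50) ≤ cubeSum (A s) → Real.exp (cubeSum (A s) / 2) ≤ U →
    h / 2 * Real.exp (-max (cubeSum (A s)) 0) ≤ H s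

namespace SignalPath

variable {A : ℕ → ι → ℝ} {H : ℕ → ℝ} {n : ℕ} {a h U : ℝ}

lemma sum_abs_le_of_neg_le (hp : SignalPath A H n a h U) {s : ℕ} (hs : ∀ r, -a ≤ A s r) :
    ∑ r, |A s r| ^ 3 ≤ cubeSum (A s) + 1 / 50 := by
  linarith [sum_abs_pow_three_le hp.a_nonneg hs, hp.card_mul_le]

lemma cubeSum_init_le (hp : SignalPath A H n a h U) : cubeSum (A 0) ≤ 1 / 100 := by
  calc cubeSum (A 0) ≤ ∑ _r : ι, a ^ 3 := Finset.sum_le_sum fun r _ =>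
        (show Odd 3 by decide).strictMono_pow.monotone ((le_abs_self _).trans (hp.abs_init_le r))
    _ = Fintype.card ι * a ^ 3 := by rw [Finset.sum_const, Finset.card_univ, nsmul_eq_mul]
    _ ≤ 1 / 100 := hp.card_mul_le

lemma linear_le (hp : SignalPath A H n a h U) {s : ℕ} (hs : s ≤ n) : 2 + 432 * h * s ≤ U := by
  have : (s : ℝ) ≤ n := by exact_mod_cast hs
  nlinarith [hp.horizon, hp.h_pos]

lemma invariant (hp : SignalPath A H n a h U) {s : ℕ} (hs : s ≤ n) :
    (∀ r, -a ≤ A s r) ∧ Real.exp (cubeSum (A s) / 2) ≤ 2 + 432 * h * s := by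
  induction s with
  | zero =>
    refine ⟨fun r => (abs_le.1 (hp.abs_init_le r)).1, ?_⟩
    have hmono : Real.exp (cubeSum (A 0) / 2) ≤ Real.exp (1 / 2) := by
      gcongr
      linarith [hp.cubeSum_init_le]
    have hexp := Real.abs_exp_sub_one_sub_id_le (x := 1 / 2) (by norm_num [abs_le])
    rw [Nat.cast_zero]
    linarith [(abs_le.1 hexp).2]
  | succ s ih =>
    obtain ⟨hneg, hexp⟩ := ih (by lia)
    have hA := hp.sum_abs_le_of_neg_le hneg
    have hF := neg_le_cubeSum hA
    have hh := hp.h_pos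
    have hH : 0 ≤ H s := le_trans (by positivity)
      (hp.lower s hs hF (hexp.trans (hp.linear_le (Nat.le_of_succ_le hs))))
    have hstep := exp_half_cubeSum_step_le hA hh.le hp.h_le hH (hp.upper s hs hF)
    rw [hp.step s hs]
    refine ⟨fun r => ?_, ?_⟩
    · calc -a ≤ A s r := hneg r
        _ ≤ A s r + H s * A s r ^ 2 := le_add_of_nonneg_right (by positivity)
    · push_cast
      linarith

lemma sum_abs_le (hp : SignalPath A H n a h U) {s : ℕ} (hs : s ≤ n) :
    ∑ r, |A s r| ^ 3 ≤ cubeSum (A s) + 1 / 50 :=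
  hp.sum_abs_le_of_neg_le (hp.invariant hs).1

lemma neg_le_cubeSum (hp : SignalPath A H n a h U) {s : ℕ} (hs : s ≤ n) :
    -(1 / 50) ≤ cubeSum (A s) :=
  AD.neg_le_cubeSum (hp.sum_abs_le hs)

lemma exp_half_le (hp : SignalPath A H n a h U) {s : ℕ} (hs : s ≤ n) :
    Real.exp (cubeSum (A s) / 2) ≤ 2 + 432 * h * n := by
  have : (s : ℝ) ≤ n := by exact_mod_cast hs
  nlinarith [(hp.invariant hs).2, hp.h_pos]

lemma le_stepSize (hp : SignalPath A H n a h U) {s : ℕ} (hs : s < n) :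
    h / 2 * Real.exp (-max (cubeSum (A s)) 0) ≤ H s :=
  hp.lower s hs (hp.neg_le_cubeSum hs.le) ((hp.exp_half_le hs.le).trans hp.horizon)

lemma stepSize_nonneg (hp : SignalPath A H n a h U) {s : ℕ} (hs : s < n) : 0 ≤ H s :=
  have := hp.h_pos
  le_trans (by positivity) (hp.le_stepSize hs)

lemma abs_stepSize_mul_le (hp : SignalPath A H n a h U) {s : ℕ} (hs : s < n) (r : ι) :
    |H s * A s r| ≤ 1 / 10 :=
  abs_mul_le_of_le_exp (hp.sum_abs_le hs.le) hp.h_le (hp.stepSize_nonneg hs)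
    (hp.upper s hs (hp.neg_le_cubeSum hs.le)) r

lemma mono (hp : SignalPath A H n a h U) {s t : ℕ} (hst : s ≤ t) (ht : t ≤ n) : A s ≤ A t := by
  induction t, hst using Nat.le_induction with
  | base => exact le_rfl
  | succ t _ ih =>
    rw [hp.step t ht]
    exact (ih (Nat.le_of_succ_le ht)).trans (le_add_of_nonneg_right fun r =>
      mul_nonneg (hp.stepSize_nonneg ht) (sq_nonneg (A t r)))

lemma stepSize_le_inv_sub_inv (hp : SignalPath A H n a h U) {t : ℕ} (ht : t < n) {r : ι}
    (hr : 0 < A t r) : H t ≤ 11 / 10 * (1 / A t r - 1 / A (t + 1) r) := by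
  have hH := hp.stepSize_nonneg ht
  have hrel := (abs_le.1 (hp.abs_stepSize_mul_le ht r)).2
  have hnext : A (t + 1) r = A t r * (1 + H t * A t r) := by
    rw [hp.step t ht, Pi.add_apply, Pi.smul_apply, Pi.pow_apply, smul_eq_mul]
    ring
  have hdiff : 1 / A t r - 1 / A (t + 1) r = H t / (1 + H t * A t r) := by
    rw [hnext]
    field_simp
    ring
  rw [hdiff, mul_div_assoc', le_div_iff₀ (by positivity)]
  nlinarith

/-- The reciprocal `1 / A · r` telescopes along the recursion. -/
lemma sum_stepSize_le (hp : SignalPath A H n a h U) {c : ℝ} (hc : 0 < c) {s : ℕ} {r : ι}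
    (hr : c ≤ A s r) : ∑ k ∈ Finset.Ico s n, H k ≤ 11 / 10 / c := by
  rcases le_or_gt n s with hns | hsn
  · rw [Finset.Ico_eq_empty_of_le hns, Finset.sum_empty]
    positivity
  have hpos : ∀ t, s ≤ t → t ≤ n → 0 < A t r := fun t hst ht =>
    hc.trans_le (hr.trans (hp.mono hst ht r))
  have htelescope : ∑ k ∈ Finset.Ico s n, H k ≤ 11 / 10 * (1 / A s r - 1 / A n r) := by
    calc ∑ k ∈ Finset.Ico s n, H k
        ≤ ∑ k ∈ Finset.Ico s n, 11 / 10 * (1 / A k r - 1 / A (k + 1) r) :=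
          Finset.sum_le_sum fun k hk => by
            rw [Finset.mem_Ico] at hk
            exact hp.stepSize_le_inv_sub_inv hk.2 (hpos k hk.1 hk.2.le)
      _ = 11 / 10 * (1 / A s r - 1 / A n r) := by
          rw [← Finset.mul_sum, ← neg_sub (1 / A n r),
            ← Finset.sum_Ico_sub (fun k => 1 / A k r) hsn.le, ← Finset.sum_neg_distrib]
          simp only [neg_sub]
  have hlast := one_div_pos.2 (hpos n hsn.le le_rfl)
  calc ∑ k ∈ Finset.Ico s n, H k ≤ 11 / 10 * (1 / A s r - 1 / A n r) := htelescope
    _ ≤ 11 / 10 * (1 / c) := by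
        have := one_div_le_one_div_of_le hc hr
        linarith
    _ = 11 / 10 / c := by ring

lemma sum_stepSize_range_le (hp : SignalPath A H n a h U) {c : ℝ} (hc : 0 < c) {r : ι}
    (hr : c ≤ A 0 r) : ∑ s ∈ Finset.range n, H s ≤ 11 / 10 / c := by
  rw [Finset.range_eq_Ico]
  exact hp.sum_stepSize_le hc hr

/-- Once `cubeSum` reaches `1`, some coordinate has reached `1 / μ`. -/
lemma sum_stepSize_filter_le (hp : SignalPath A H n a h U) {μ : ℝ} (hμ : 0 < μ)
    (hμm : μ ^ 3 = Fintype.card ι) :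
    ∑ s ∈ Finset.range n with 1 ≤ cubeSum (A s), H s ≤ 11 / 10 * μ := by
  classical
  by_cases hex : ∃ s, s < n ∧ 1 ≤ cubeSum (A s)
  · obtain ⟨-, hτ⟩ := Nat.find_spec hex
    obtain ⟨r, hr⟩ := exists_le_of_one_le_cubeSum hμm hτ
    calc ∑ s ∈ Finset.range n with 1 ≤ cubeSum (A s), H s
        ≤ ∑ s ∈ Finset.Ico (Nat.find hex) n, H s := by
          refine Finset.sum_le_sum_of_subset_of_nonneg (fun s hs => ?_) fun s hs _ =>
            hp.stepSize_nonneg (Finset.mem_Ico.1 hs).2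
          rw [Finset.mem_filter, Finset.mem_range] at hs
          exact Finset.mem_Ico.2 ⟨Nat.find_min' hex hs, hs.1⟩
      _ ≤ 11 / 10 / (1 / μ) := hp.sum_stepSize_le (by positivity) hr
      _ = 11 / 10 * μ := by rw [div_div_eq_mul_div, div_one]
  · rw [Finset.filter_false_of_mem, Finset.sum_empty]
    · positivity
    · exact fun s hs hone => hex ⟨s, Finset.mem_range.1 hs, hone⟩

/-- The factor `exp (F / 16)` is bounded while `F ≤ 1`, and by `V` afterwards. -/
lemma sum_weights_le (hp : SignalPath A H n a h U) {c μ V : ℝ} (hc : 0 < c) {r : ι}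
    (hr : c ≤ A 0 r) (hμ : 0 < μ) (hμm : μ ^ 3 = Fintype.card ι) {G : ℕ → ℝ}
    (hG : ∀ s < n, G s ≤ 4 * H s * Real.exp (max (cubeSum (A s)) 0 / 16)) (hV0 : 0 ≤ V)
    (hV : ∀ s < n, Real.exp (max (cubeSum (A s)) 0 / 16) ≤ V) :
    ∑ s ∈ Finset.range n, G s ≤ 5 / c + 5 * V * μ := by
  have hterm : ∀ s ∈ Finset.range n, G s ≤
      45 / 10 * H s + 4 * V * (if 1 ≤ cubeSum (A s) then H s else 0) := by
    intro s hs
    replace hs := Finset.mem_range.1 hs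
    have hH := hp.stepSize_nonneg hs
    refine (hG s hs).trans ?_
    split_ifs with hone
    · nlinarith [mul_le_mul_of_nonneg_left (hV s hs) hH]
    · have hle : max (cubeSum (A s)) 0 ≤ 1 := max_le (by linarith) (by norm_num)
      have hexp : Real.exp (max (cubeSum (A s)) 0 / 16) ≤ Real.exp (1 / 16) := by gcongr
      have hexp' := (abs_le.1 (Real.abs_exp_sub_one_sub_id_le (x := 1 / 16)
        (by norm_num [abs_le]))).2
      nlinarith
  calc ∑ s ∈ Finset.range n, G s
      ≤ 45 / 10 * ∑ s ∈ Finset.range n, H s +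
          4 * V * ∑ s ∈ Finset.range n with 1 ≤ cubeSum (A s), H s := by
        rw [Finset.sum_filter, Finset.mul_sum, Finset.mul_sum, ← Finset.sum_add_distrib]
        exact Finset.sum_le_sum hterm
    _ ≤ 45 / 10 * (11 / 10 / c) + 4 * V * (11 / 10 * μ) := by
        gcongr
        exacts [hp.sum_stepSize_range_le hc hr, hp.sum_stepSize_filter_le hμ hμm]
    _ = (495 / 100) / c + (44 / 10) * V * μ := by ring
    _ ≤ 5 / c + 5 * V * μ := by gcongr <;> norm_num

lemma le_cubeSum_of_long (hp : SignalPath A H n a h U) {c K : ℝ} (hc : 0 < c) {r : ι}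
    (hr : c ≤ A 0 r) (hK : 0 ≤ K) (hlong : 22 / 10 * Real.exp K < h * n * c) :
    K ≤ cubeSum (A n) := by
  by_contra! hlt
  have hstep : ∀ s ∈ Finset.range n, h / 2 * Real.exp (-K) ≤ H s := by
    intro s hs
    replace hs := Finset.mem_range.1 hs
    have hmax : max (cubeSum (A s)) 0 ≤ K :=
      max_le ((cubeSum_mono (hp.mono hs.le le_rfl)).trans hlt.le) hK
    have := hp.h_pos
    exact le_trans (by gcongr) (hp.le_stepSize hs)
  have hsum : n * (h / 2 * Real.exp (-K)) * c ≤ 11 / 10 := by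
    have h := (Finset.sum_le_sum hstep).trans (hp.sum_stepSize_range_le hc hr)
    rwa [Finset.sum_const, Finset.card_range, nsmul_eq_mul, le_div_iff₀ hc] at h
  have hcancel : n * (h / 2 * Real.exp (-K)) * c * Real.exp K = h * n * c / 2 := by
    rw [Real.exp_neg]
    field_simp
  nlinarith [mul_le_mul_of_nonneg_right hsum (Real.exp_pos K).le]

end SignalPath

end CubicRecursion

/-! ### The network -/

section Network

variable {m P d : ℕ}

lemma phi_sub_phi_neg (z : ℝ) : phi z - phi (-z) = z ^ 3 := by
  unfold phi
  rcases le_total 0 z with h | h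
  · rw [max_eq_right h, max_eq_left (neg_nonpos.2 h)]; ring
  · rw [max_eq_left h, max_eq_right (neg_nonneg.2 h)]; ring

lemma netOut_eq_sum_cube (w : Fin m → Fin d → ℝ) (X : Fin P → Fin d → ℝ) :
    netOut w X = ∑ r, ∑ p, dot (w r) (X p) ^ 3 := by
  simp only [netOut, phi_sub_phi_neg]

lemma dot_eq_dotProduct (a b : Fin d → ℝ) : dot a b = dotProduct a b := rfl

lemma e1_eq_single (hd : 0 < d) : e1 d hd = Pi.single ⟨0, hd⟩ 1 := by
  ext k
  simp [e1, Pi.single_apply]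

lemma dot_add_right (a b c : Fin d → ℝ) : dot a (b + c) = dot a b + dot a c :=
  dotProduct_add a b c

lemma dot_e1 (hd : 0 < d) (a : Fin d → ℝ) : dot a (e1 d hd) = a ⟨0, hd⟩ := by
  rw [dot_eq_dotProduct, e1_eq_single, dotProduct_single_one]

lemma dot_smul_e1 (hd : 0 < d) (a : Fin d → ℝ) (s : ℝ) :
    dot a (s • e1 d hd) = s * a ⟨0, hd⟩ := by
  rw [dot_eq_dotProduct, dotProduct_smul, smul_eq_mul, ← dot_eq_dotProduct, dot_e1]

end Network

namespace Setting

variable (S : Setting)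

/-! ### Signal and noise parts of the margin -/

lemma y_sq (i : Fin S.N) : S.y i ^ 2 = 1 := sq_eq_one_iff.2 (S.hy i)

lemma abs_y (i : Fin S.N) : |S.y i| = 1 :=
  (abs_eq zero_le_one).2 (S.hy i)

lemma mem_SL_or_SU (i : Fin S.N) : i ∈ S.SL ∨ i ∈ S.SU := by
  simp [← Finset.mem_union, S.hunion]

/-- Relative amplitude of the perturbed signal patch: on a learnable sample that patch is
`α · advAmp · y_i u`. -/
def advAmp (t : ℕ) (i : Fin S.N) : ℝ :=
  S.y i * dot (S.xadv t i (S.sig i)) (e1 S.d S.hd) / S.alpha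

/-- Signal alignment `A_r = α w_{r,1}` of each filter, the quantity that follows a closed cubic
recursion. -/
def align (t : ℕ) (r : Fin S.m) : ℝ := S.alpha * S.wsig t r

/-- Step size `H_t` of the recursion `A_r ↦ A_r + H_t A_r²` of the signal alignments. -/
def signalStep (fT : Fin S.N → ℝ) (t : ℕ) : ℝ :=
  3 * (S.eta * S.alpha ^ 2) / S.N * ∑ i ∈ S.SL, S.gAD fT t i * S.advAmp t i ^ 3

/-- Contribution of the noise patches to the adversarial margin. -/
def noiseMarg (t : ℕ) (i : Fin S.N) : ℝ :=
  S.y i * ∑ r, ∑ p ∈ univ.erase (S.sig i), dot (S.w t r) (S.x i p) ^ 3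

lemma gAD_eq_sigmoid_sub (fT : Fin S.N → ℝ) (t : ℕ) (i : Fin S.N) :
    S.gAD fT t i = Real.sigmoid (S.y i * fT i) - Real.sigmoid (S.marg t i) := by
  unfold gAD
  simp only [sigm_eq_sigmoid, psi_eq_sigmoid_neg, neg_neg, Real.sigmoid_neg]
  ring

lemma exists_xadv_eq_smul (t : ℕ) (i : Fin S.N) :
    ∃ c : ℝ, S.xadv t i (S.sig i) = c • S.x i (S.sig i) := by
  obtain ⟨c, hc⟩ := S.hadvspan t i
  exact ⟨c + 1, by rw [add_smul, one_smul, ← hc, sub_add_cancel]⟩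

lemma xadv_sig_of_mem_SL (t : ℕ) {i : Fin S.N} (hi : i ∈ S.SL) :
    S.xadv t i (S.sig i) = (S.alpha * S.advAmp t i * S.y i) • e1 S.d S.hd := by
  obtain ⟨c, hc⟩ := S.exists_xadv_eq_smul t i
  have hα := S.halpha.ne'
  rw [S.hsigL i hi, smul_smul] at hc
  rw [advAmp, hc, dot_e1]
  congr 1
  simp only [e1, Pi.smul_apply, smul_eq_mul, if_true, mul_one]
  field_simp
  linear_combination (-(c * S.y i)) * S.y_sq i

lemma dot_w_xadv_sig_of_mem_SU (t : ℕ) (r : Fin S.m) {i : Fin S.N} (hi : i ∈ S.SU) :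
    dot (S.w t r) (S.xadv t i (S.sig i)) = 0 := by
  obtain ⟨c, hc⟩ := S.exists_xadv_eq_smul t i
  rw [hc, S.hsigU i hi, smul_smul, dot_eq_dotProduct, dotProduct_smul, ← dot_eq_dotProduct,
    S.hwperp, smul_zero]

lemma dot_w_xadv_sig_of_mem_SL (t : ℕ) (r : Fin S.m) {i : Fin S.N} (hi : i ∈ S.SL) :
    dot (S.w t r) (S.xadv t i (S.sig i)) = S.advAmp t i * S.y i * S.align t r := by
  rw [S.xadv_sig_of_mem_SL t hi, dot_smul_e1, align, wsig]
  ring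

lemma sum_xadv_eq (f : (Fin S.d → ℝ) → ℝ) (t : ℕ) (i : Fin S.N) :
    ∑ p, f (S.xadv t i p) =
      f (S.xadv t i (S.sig i)) + ∑ p ∈ univ.erase (S.sig i), f (S.x i p) := by
  rw [← add_sum_erase _ _ (mem_univ (S.sig i))]
  congr 1
  exact sum_congr rfl fun p hp => by rw [S.hadvnoise t i p (ne_of_mem_erase hp)]

lemma marg_eq_add_noiseMarg (t : ℕ) (i : Fin S.N) :
    S.marg t i = S.y i * ∑ r, dot (S.w t r) (S.xadv t i (S.sig i)) ^ 3 + S.noiseMarg t i := by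
  rw [marg, noiseMarg, netOut_eq_sum_cube, ← mul_add, ← sum_add_distrib]
  exact congr_arg _ (sum_congr rfl fun r _ => S.sum_xadv_eq (fun z => dot (S.w t r) z ^ 3) t i)

lemma marg_of_mem_SU (t : ℕ) {i : Fin S.N} (hi : i ∈ S.SU) :
    S.marg t i = S.noiseMarg t i := by
  simp [S.marg_eq_add_noiseMarg, S.dot_w_xadv_sig_of_mem_SU t _ hi]

lemma marg_of_mem_SL (t : ℕ) {i : Fin S.N} (hi : i ∈ S.SL) :
    S.marg t i = S.advAmp t i ^ 3 * cubeSum (S.align t) + S.noiseMarg t i := by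
  rw [S.marg_eq_add_noiseMarg, cubeSum, mul_sum, mul_sum]
  refine congr_arg (· + _) (sum_congr rfl fun r _ => ?_)
  rw [S.dot_w_xadv_sig_of_mem_SL t r hi]
  linear_combination (S.advAmp t i ^ 3 * S.align t r ^ 3) * (S.y i ^ 2 + 1) * S.y_sq i

lemma abs_noiseMarg_le {t : ℕ} {i : Fin S.N} {β : ℝ} (hβ : 0 ≤ β)
    (h : ∀ r j, j ≠ S.sig i → |dot (S.w t r) (S.x i j)| ≤ β) :
    |S.noiseMarg t i| ≤ S.m * S.P * β ^ 3 := by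
  have hpatches : ∀ r, |∑ p ∈ univ.erase (S.sig i), dot (S.w t r) (S.x i p) ^ 3| ≤
      S.P * β ^ 3 := fun r =>
    calc |∑ p ∈ univ.erase (S.sig i), dot (S.w t r) (S.x i p) ^ 3|
        ≤ #(univ.erase (S.sig i)) • β ^ 3 :=
          (abs_sum_le_sum_abs _ _).trans <| sum_le_card_nsmul _ _ _ fun p hp => by
            rw [abs_pow]
            exact pow_le_pow_left₀ (abs_nonneg _) (h r p (ne_of_mem_erase hp)) 3
      _ ≤ S.P * β ^ 3 := by
          rw [nsmul_eq_mul]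
          gcongr
          simp
  calc |S.noiseMarg t i|
      = |∑ r, ∑ p ∈ univ.erase (S.sig i), dot (S.w t r) (S.x i p) ^ 3| := by
        rw [noiseMarg, abs_mul, S.abs_y, one_mul]
    _ ≤ #(univ : Finset (Fin S.m)) • (S.P * β ^ 3) :=
        (abs_sum_le_sum_abs _ _).trans (sum_le_card_nsmul _ _ _ fun r _ => hpatches r)
    _ = S.m * S.P * β ^ 3 := by simp [mul_assoc]

/-! ### One step of adversarial distillation -/

variable {S} {fT : Fin S.N → ℝ}

lemma ADDyn.dot_succ (hdyn : S.ADDyn fT) (t : ℕ) (r : Fin S.m) (z : Fin S.d → ℝ) :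
    dot (S.w (t + 1) r) z = dot (S.w t r) z + 3 * S.eta / S.N * ∑ i, S.gAD fT t i * S.y i *
      ∑ p, dot (S.w t r) (S.xadv t i p) ^ 2 * dot (S.xadv t i p) z := by
  rw [hdyn t r]
  simp only [dot_eq_dotProduct, add_dotProduct, smul_dotProduct, sum_dotProduct, smul_eq_mul]

lemma sum_sq_dot_mul_dot_e1_of_mem_SU (t : ℕ) (r : Fin S.m) {i : Fin S.N} (hi : i ∈ S.SU) :
    ∑ p, dot (S.w t r) (S.xadv t i p) ^ 2 * dot (S.xadv t i p) (e1 S.d S.hd) = 0 := by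
  rw [S.sum_xadv_eq (fun z => dot (S.w t r) z ^ 2 * dot z (e1 S.d S.hd)),
    S.dot_w_xadv_sig_of_mem_SU t r hi, sum_eq_zero]
  · simp
  · exact fun p hp => by rw [S.hnoiseU i p (ne_of_mem_erase hp), mul_zero]

lemma sum_sq_dot_mul_dot_e1_of_mem_SL (t : ℕ) (r : Fin S.m) {i : Fin S.N} (hi : i ∈ S.SL) :
    ∑ p, dot (S.w t r) (S.xadv t i p) ^ 2 * dot (S.xadv t i p) (e1 S.d S.hd) =
      S.alpha * S.y i * S.advAmp t i ^ 3 * S.align t r ^ 2 := by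
  have hsig : dot (S.xadv t i (S.sig i)) (e1 S.d S.hd) = S.alpha * S.advAmp t i * S.y i := by
    rw [S.xadv_sig_of_mem_SL t hi, dot_e1]
    simp [e1]
  rw [S.sum_xadv_eq (fun z => dot (S.w t r) z ^ 2 * dot z (e1 S.d S.hd)),
    S.dot_w_xadv_sig_of_mem_SL t r hi, hsig, sum_eq_zero]
  · linear_combination (S.alpha * S.y i * S.advAmp t i ^ 3 * S.align t r ^ 2) * S.y_sq i
  · exact fun p hp => by rw [S.hnoiseU i p (ne_of_mem_erase hp), mul_zero]

lemma ADDyn.align_succ (hdyn : S.ADDyn fT) (t : ℕ) :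
    S.align (t + 1) = S.align t + S.signalStep fT t • S.align t ^ 2 := by
  ext r
  have hcoord := hdyn.dot_succ t r (e1 S.d S.hd)
  rw [dot_e1, dot_e1, ← S.hunion, sum_union S.hdisj,
    sum_eq_zero (s := S.SU) fun i hi => by rw [sum_sq_dot_mul_dot_e1_of_mem_SU t r hi, mul_zero],
    add_zero] at hcoord
  have hlearn : ∑ i ∈ S.SL, S.gAD fT t i * S.y i *
      ∑ p, dot (S.w t r) (S.xadv t i p) ^ 2 * dot (S.xadv t i p) (e1 S.d S.hd) =
      S.alpha * S.align t r ^ 2 * ∑ i ∈ S.SL, S.gAD fT t i * S.advAmp t i ^ 3 := by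
    rw [mul_sum]
    refine sum_congr rfl fun i hi => ?_
    rw [sum_sq_dot_mul_dot_e1_of_mem_SL t r hi]
    linear_combination
      (S.gAD fT t i * S.alpha * S.advAmp t i ^ 3 * S.align t r ^ 2) * S.y_sq i
  rw [hlearn] at hcoord
  rw [align, wsig, hcoord, Pi.add_apply, Pi.smul_apply, Pi.pow_apply, smul_eq_mul, signalStep]
  unfold align wsig
  ring

lemma ADDyn.dot_succ_of_dot_e1_eq_zero (hdyn : S.ADDyn fT) (t : ℕ) (r : Fin S.m)
    {z : Fin S.d → ℝ} (hz : dot (e1 S.d S.hd) z = 0) :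
    dot (S.w (t + 1) r) z = dot (S.w t r) z + 3 * S.eta / S.N * ∑ i, S.gAD fT t i * S.y i *
      ∑ p ∈ univ.erase (S.sig i), dot (S.w t r) (S.x i p) ^ 2 * dot (S.x i p) z := by
  have hsig : ∀ i, dot (S.w t r) (S.xadv t i (S.sig i)) ^ 2 * dot (S.xadv t i (S.sig i)) z = 0 := by
    intro i
    rcases S.mem_SL_or_SU i with hi | hi
    · rw [S.xadv_sig_of_mem_SL t hi, dot_eq_dotProduct _ z, smul_dotProduct,
        ← dot_eq_dotProduct, hz, smul_zero, mul_zero]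
    · rw [S.dot_w_xadv_sig_of_mem_SU t r hi, zero_pow two_ne_zero, zero_mul]
  rw [hdyn.dot_succ]
  congr 2
  refine sum_congr rfl fun i _ => ?_
  rw [S.sum_xadv_eq (fun u => dot (S.w t r) u ^ 2 * dot u z), hsig, zero_add]

/-! ### Drift orthogonal to the learnable feature -/

lemma ADDyn.abs_dot_succ_sub_le (hdyn : S.ADDyn fT) {t : ℕ} {r : Fin S.m} {z : Fin S.d → ℝ}
    (hz : dot (e1 S.d S.hd) z = 0) {β : ℝ}
    (hβ : ∀ i j, j ≠ S.sig i → |dot (S.w t r) (S.x i j)| ≤ β) :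
    |dot (S.w (t + 1) r) z - dot (S.w t r) z| ≤ 3 * β ^ 2 / S.N *
      ∑ i, S.eta * |S.gAD fT t i| * ∑ p ∈ univ.erase (S.sig i), |dot (S.x i p) z| := by
  have hη := S.heta
  have hsample : ∀ i, |S.gAD fT t i * S.y i *
      ∑ p ∈ univ.erase (S.sig i), dot (S.w t r) (S.x i p) ^ 2 * dot (S.x i p) z| ≤
      |S.gAD fT t i| * (β ^ 2 * ∑ p ∈ univ.erase (S.sig i), |dot (S.x i p) z|) := by
    intro i
    rw [abs_mul, abs_mul, S.abs_y, mul_one, mul_sum]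
    gcongr
    refine (abs_sum_le_sum_abs _ _).trans (sum_le_sum fun p hp => ?_)
    rw [abs_mul, abs_of_nonneg (sq_nonneg _), ← sq_abs]
    gcongr
    exact hβ i p (ne_of_mem_erase hp)
  rw [hdyn.dot_succ_of_dot_e1_eq_zero t r hz, add_sub_cancel_left, abs_mul,
    abs_of_nonneg (by positivity)]
  calc _ ≤ 3 * S.eta / S.N * ∑ i, |S.gAD fT t i| *
          (β ^ 2 * ∑ p ∈ univ.erase (S.sig i), |dot (S.x i p) z|) := by
        gcongr
        exact (abs_sum_le_sum_abs _ _).trans (sum_le_sum fun i _ => hsample i)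
    _ = _ := by
        rw [mul_sum, mul_sum]
        exact sum_congr rfl fun i _ => by ring

lemma ADDyn.abs_dot_sub_init_le (hdyn : S.ADDyn fT) {n : ℕ} {r : Fin S.m} {z : Fin S.d → ℝ}
    (hz : dot (e1 S.d S.hd) z = 0) {β Q : ℝ}
    (hβ : ∀ t < n, ∀ i j, j ≠ S.sig i → |dot (S.w t r) (S.x i j)| ≤ β)
    (hQ : ∀ i, ∑ t ∈ range n, S.eta * |S.gAD fT t i| ≤ Q) :
    |dot (S.w n r) z - dot (S.w 0 r) z| ≤
      3 * β ^ 2 * Q / S.N * ∑ i, ∑ p ∈ univ.erase (S.sig i), |dot (S.x i p) z| := by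
  calc |dot (S.w n r) z - dot (S.w 0 r) z|
      = |∑ t ∈ range n, (dot (S.w (t + 1) r) z - dot (S.w t r) z)| := by
        rw [sum_range_sub (fun t => dot (S.w t r) z)]
    _ ≤ ∑ t ∈ range n, 3 * β ^ 2 / S.N *
          ∑ i, S.eta * |S.gAD fT t i| * ∑ p ∈ univ.erase (S.sig i), |dot (S.x i p) z| :=
        (abs_sum_le_sum_abs _ _).trans <| sum_le_sum fun t ht =>
          hdyn.abs_dot_succ_sub_le hz (hβ t (mem_range.1 ht))
    _ = 3 * β ^ 2 / S.N * ∑ i, (∑ t ∈ range n, S.eta * |S.gAD fT t i|) *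
          ∑ p ∈ univ.erase (S.sig i), |dot (S.x i p) z| := by
        rw [← mul_sum, sum_comm]
        simp only [sum_mul]
    _ ≤ 3 * β ^ 2 / S.N * ∑ i, Q * ∑ p ∈ univ.erase (S.sig i), |dot (S.x i p) z| := by
        gcongr with i _
        exact hQ i
    _ = _ := by rw [← mul_sum]; ring

end Setting

/-! ### Parameter regime -/

section RealArithmetic

lemma mul_le_one_of_le_inv_mul_div {C L a b c : ℝ} (hC : 0 < C) (hL : 0 < L) (hc : 0 < c)
    (h : a ≤ C⁻¹ * b / L) (hb : b ≤ 1 / c) : C * (a * c) * L ≤ 1 :=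
  calc C * (a * c) * L ≤ C * (C⁻¹ * (1 / c) / L * c) * L := by
        gcongr
        exact h.trans (by gcongr)
    _ = 1 := by field_simp

lemma pos_of_pos_le_div {a b L : ℝ} (ha : 0 < a) (hb : 0 ≤ b) (h : a ≤ b / L) : 0 < L := by
  by_contra! hL
  exact ((div_nonpos_of_nonneg_of_nonpos hb hL).trans_lt ha).not_ge h

lemma le_one_of_mul_mul_le_one {C L a : ℝ} (hC : 2 ≤ C) (hL : 1 / 2 ≤ L) (ha : 0 ≤ a)
    (h : C * a * L ≤ 1) : a ≤ 1 :=
  calc a = 2 * a * (1 / 2) := by ring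
    _ ≤ C * a * L := by gcongr
    _ ≤ 1 := h

lemma rpow_div_three_pow_three {x : ℝ} (hx : 0 ≤ x) (a : ℝ) : (x ^ (a / 3)) ^ 3 = x ^ a := by
  rw [← Real.rpow_mul_natCast hx]
  norm_num

lemma half_le_log_of_two_le {x : ℝ} (hx : 2 ≤ x) : 1 / 2 ≤ Real.log x :=
  calc (1 : ℝ) / 2 ≤ Real.log 2 := by linarith [Real.log_two_gt_d9]
    _ ≤ Real.log x := Real.log_le_log two_pos hx

lemma one_le_log_of_sixteen_le {x : ℝ} (hx : 16 ≤ x) : 1 ≤ Real.log x := by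
  refine le_trans ?_ (Real.log_le_log (by norm_num) hx)
  rw [show (16 : ℝ) = 2 ^ 4 by norm_num, Real.log_pow]
  push_cast
  linarith [half_le_log_of_two_le le_rfl]

lemma mul_le_of_pow_eight_le {Z q L V μ : ℝ} (hq : 0 < q) (hL : 1 ≤ L)
    (hZ : 10 ^ 6 * L ^ 3 ≤ Z) (hμq : μ ^ 2 * q ≤ 1) (hV : V ^ 8 ≤ Z ^ 2 / q ^ 4) :
    420 * (V * μ * q * L) ≤ Z := by
  have hZ0 : 0 < Z := lt_of_lt_of_le (by positivity) hZ
  have hZ1 : 1 ≤ Z := by linarith [one_le_pow₀ hL (n := 3)]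
  have hV4 : V ^ 4 * q ^ 2 ≤ Z := by
    refine le_of_sq_le_sq ?_ hZ0.le
    rw [le_div_iff₀ (by positivity)] at hV
    linarith
  have hV2 : V ^ 2 * q ≤ Z := by
    refine le_of_sq_le_sq ?_ hZ0.le
    linarith [le_self_pow₀ hZ1 two_ne_zero]
  refine le_of_sq_le_sq ?_ hZ0.le
  calc (420 * (V * μ * q * L)) ^ 2 = 176400 * L ^ 2 * (V ^ 2 * q) * (μ ^ 2 * q) := by ring
    _ ≤ 176400 * L ^ 3 * Z * 1 := by
        gcongr
        norm_num
    _ ≤ Z * Z * 1 := by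
        gcongr
        linarith [one_le_pow₀ hL (n := 3)]
    _ = Z ^ 2 := by ring

end RealArithmetic

namespace Setting

variable (S : Setting)

lemma one_le_N : (1 : ℝ) ≤ S.N := Nat.one_le_cast.2 S.hN

lemma one_le_m : (1 : ℝ) ≤ S.m := Nat.one_le_cast.2 S.hm

lemma one_le_P : (1 : ℝ) ≤ S.P := Nat.one_le_cast.2 S.hP

lemma one_le_d : (1 : ℝ) ≤ S.d := Nat.one_le_cast.2 S.hd

/-- The ratio `NmP/δ` over which the paper takes its union bounds. -/
def unionRatio : ℝ := (S.N : ℝ) * S.m * S.P / S.delta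

/-- The logarithmic factor `log(TNmP/δ)`. -/
def logHorizon : ℝ := Real.log ((S.T : ℝ) * S.N * S.m * S.P / S.delta)

/-- The logarithmic factor `log(TdNmP/δ)`. -/
def logHorizonDim : ℝ := Real.log ((S.T : ℝ) * S.d * S.N * S.m * S.P / S.delta)

/-- The logarithmic factor `log(16NmP/δ)` of the initial noise responses. -/
def logNoise : ℝ := Real.log ((16 : ℝ) * S.N * S.m * S.P / S.delta)

/-- The scale `σ₀ σ_n √(d log(16NmP/δ))` of the initial noise responses. -/
def noiseScale : ℝ := S.sigma0 * S.sigman * Real.sqrt (S.d * S.logNoise)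

/-- Bound `α σ₀ √(2 log(16m/δ))` on the initial signal alignments. -/
def alignInit : ℝ :=
  S.alpha * (S.sigma0 * Real.sqrt (2 * Real.log ((16 : ℝ) * S.m / S.delta)))

/-- Accumulated gradient weight that every sample may spend while all noise responses stay
below three times `noiseScale`. -/
def weightBudget : ℝ := S.N / (42 * S.noiseScale * S.sigman ^ 2 * S.d)

/-- Bound on `exp(F/2)` over the whole horizon, where `F = ∑ r, (α w_{r,1})³`. -/
def potentialCap : ℝ := 2 + 432 * (S.eta * S.alpha ^ 2) * S.T

/-- The signal-to-noise ratio `α³ N / (σ_n √d)³`. -/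
def signalToNoise : ℝ := S.alpha ^ 3 * S.N / (S.sigman ^ 3 * (S.d * Real.sqrt S.d))

/-- The parameter regime of the theorem: Condition (H), sparse unlearnable samples and the
horizon bound `T ≤ T_max`, for a sufficiently large constant. -/
structure Admissible (C : ℝ) : Prop where
  C_ge : 10 ^ 6 ≤ C
  condH : S.CondH C
  sparse : S.SparseRegime C
  T_le_Tmax : (S.T : ℝ) ≤ S.Tmax

lemma logHorizon_eq : S.logHorizon = Real.log (S.T * S.unionRatio) := by
  rw [logHorizon, unionRatio]
  congr 1
  ring

lemma logHorizonDim_eq : S.logHorizonDim = Real.log (S.d * (S.T * S.unionRatio)) := by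
  rw [logHorizonDim, unionRatio]
  congr 1
  ring

lemma logNoise_eq : S.logNoise = Real.log (16 * S.unionRatio) := by
  rw [logNoise, unionRatio]
  congr 1
  ring

namespace Admissible

variable {S} {C : ℝ} (h : S.Admissible C)

include h

/-! ### Logarithmic factors -/

lemma C_pos : 0 < C := by linarith [h.C_ge]

lemma two_le_unionRatio : 2 ≤ S.unionRatio := by
  obtain ⟨-, -, -, -, -, -, -, -, -, -, hP, -⟩ := h.condH
  have hP' : (2 : ℝ) ≤ S.P := Nat.ofNat_le_cast.2 hP
  have hNm : 1 ≤ (S.N : ℝ) * S.m := one_le_mul_of_one_le_of_one_le S.one_le_N S.one_le_m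
  rw [unionRatio, le_div_iff₀ S.hdelta0]
  calc 2 * S.delta ≤ 2 * 1 := by linarith [S.hdelta1]
    _ ≤ S.P * (S.N * S.m) := by gcongr
    _ = S.N * S.m * S.P := by ring

lemma logHorizonDim_pos : 0 < S.logHorizonDim := by
  obtain ⟨-, -, -, -, hσ0, -⟩ := h.condH
  have := h.C_pos
  have := S.halpha
  have := S.hsigman
  exact pos_of_pos_le_div S.hsigma0 (by positivity) hσ0

lemma logHorizon_pos : 0 < S.logHorizon := by
  obtain ⟨-, -, -, -, -, hη, -⟩ := h.condH
  have := h.C_pos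
  have := S.halpha
  have := S.hsigman
  have := S.hsigma0
  exact pos_of_pos_le_div S.heta (by positivity) hη

lemma one_le_T : (1 : ℝ) ≤ S.T := by
  refine Nat.one_le_cast.2 (Nat.one_le_iff_ne_zero.2 fun hT => ?_)
  have := h.logHorizon_pos
  simp [logHorizon, hT] at this

lemma unionRatio_le : S.unionRatio ≤ S.T * S.unionRatio :=
  le_mul_of_one_le_left (by linarith [h.two_le_unionRatio]) h.one_le_T

lemma half_le_logHorizon : 1 / 2 ≤ S.logHorizon := by
  rw [logHorizon_eq]
  exact half_le_log_of_two_le (h.two_le_unionRatio.trans h.unionRatio_le)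

lemma logHorizonDim_eq_add : S.logHorizonDim = Real.log S.d + S.logHorizon := by
  have hd := S.one_le_d
  have hTE := h.two_le_unionRatio.trans h.unionRatio_le
  rw [logHorizonDim_eq, logHorizon_eq, Real.log_mul (by positivity) (by positivity)]

lemma logHorizon_le_logHorizonDim : S.logHorizon ≤ S.logHorizonDim := by
  rw [h.logHorizonDim_eq_add]
  linarith [Real.log_nonneg S.one_le_d]

/-! ### Initialization scale and learning rate -/

lemma sigma0_noise_le :
    C * (S.sigma0 * ((S.m : ℝ) ^ ((2 : ℝ) / 3) * (S.P : ℝ) ^ ((2 : ℝ) / 3) *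
      S.sigman * Real.sqrt S.d)) * S.logHorizonDim ≤ 1 := by
  obtain ⟨-, -, -, -, hσ0, -⟩ := h.condH
  have := S.hsigman
  have := S.one_le_m
  have := S.one_le_P
  have := S.one_le_d
  exact mul_le_one_of_le_inv_mul_div h.C_pos h.logHorizonDim_pos (by positivity) hσ0
    ((min_le_left _ _).trans (min_le_left _ _))

lemma sigma0_signal_le :
    C * (S.sigma0 * (S.alpha * (S.m : ℝ) ^ ((2 : ℝ) / 3))) * S.logHorizonDim ≤ 1 := by
  obtain ⟨-, -, -, -, hσ0, -⟩ := h.condH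
  have := S.halpha
  have := S.one_le_m
  exact mul_le_one_of_le_inv_mul_div h.C_pos h.logHorizonDim_pos (by positivity) hσ0
    ((min_le_left _ _).trans (min_le_right _ _))

lemma sigma0_test_le :
    C * (S.sigma0 * (S.sigman * S.m ^ 2 * Real.sqrt S.P * S.d)) * S.logHorizonDim ≤ 1 := by
  obtain ⟨-, -, -, -, hσ0, -⟩ := h.condH
  have := S.hsigman
  have := S.one_le_m
  have := S.one_le_P
  have := S.one_le_d
  exact mul_le_one_of_le_inv_mul_div h.C_pos h.logHorizonDim_pos (by positivity) hσ0
    (min_le_right _ _)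

lemma rate_noise_le : C * (S.eta * (S.sigman ^ 2 * S.d)) * S.logHorizon ≤ 1 := by
  obtain ⟨-, -, -, -, -, hη, -⟩ := h.condH
  have := S.hsigman
  have := S.one_le_d
  exact mul_le_one_of_le_inv_mul_div h.C_pos h.logHorizon_pos (by positivity) hη
    ((min_le_left _ _).trans (min_le_right _ _))

lemma rate_signal_le : C * (S.eta * S.alpha ^ 2) * S.logHorizon ≤ 1 := by
  obtain ⟨-, -, -, -, -, hη, -⟩ := h.condH
  have := S.halpha
  exact mul_le_one_of_le_inv_mul_div h.C_pos h.logHorizon_pos (by positivity) hη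
    (min_le_right _ _)

lemma sigma0_sigman_d_le_one : S.sigma0 * S.sigman * S.d ≤ 1 := by
  have hσ := S.hsigman
  have hσ0 := S.hsigma0
  have hm := S.one_le_m
  have hwidth : (1 : ℝ) ≤ S.m ^ 2 * Real.sqrt S.P :=
    one_le_mul_of_one_le_of_one_le (one_le_pow₀ hm) (Real.one_le_sqrt.2 S.one_le_P)
  calc S.sigma0 * S.sigman * S.d
      ≤ S.sigma0 * S.sigman * S.d * (S.m ^ 2 * Real.sqrt S.P) :=
        le_mul_of_one_le_right (by positivity) hwidth
    _ = S.sigma0 * (S.sigman * S.m ^ 2 * Real.sqrt S.P * S.d) := by ring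
    _ ≤ 1 := le_one_of_mul_mul_le_one (by linarith [h.C_ge])
        (h.half_le_logHorizon.trans h.logHorizon_le_logHorizonDim) (by positivity)
        h.sigma0_test_le

/-! ### Consequences for the horizon -/

lemma C_mul_N_le :
    C * S.N ≤ S.T * (S.eta * S.sigma0 * (S.sigman ^ 3 * (S.d * Real.sqrt S.d))) := by
  obtain ⟨-, hT, -⟩ := h.condH
  have := S.heta
  have := S.hsigma0
  have := S.hsigman
  have := S.one_le_d
  rw [← mul_assoc _ (S.sigman ^ 3)]
  exact (div_le_iff₀ (by positivity)).1 hT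

lemma C_le_T : C ≤ S.T := by
  have hη := S.heta
  have hσ0 := S.hsigma0
  have hσ := S.hsigman
  have hsqrt : Real.sqrt S.d ≤ S.d :=
    Real.sqrt_le_iff.2 ⟨by positivity, le_self_pow₀ S.one_le_d two_ne_zero⟩
  have hrate : S.eta * (S.sigman ^ 2 * S.d) ≤ 1 :=
    le_one_of_mul_mul_le_one (by linarith [h.C_ge]) h.half_le_logHorizon (by positivity)
      h.rate_noise_le
  have hscale : S.eta * S.sigma0 * (S.sigman ^ 3 * (S.d * Real.sqrt S.d)) ≤ 1 :=
    calc S.eta * S.sigma0 * (S.sigman ^ 3 * (S.d * Real.sqrt S.d))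
        ≤ S.eta * S.sigma0 * (S.sigman ^ 3 * (S.d * S.d)) := by gcongr
      _ = S.sigma0 * S.sigman * S.d * (S.eta * (S.sigman ^ 2 * S.d)) := by ring
      _ ≤ 1 := mul_le_one₀ h.sigma0_sigman_d_le_one (by positivity) hrate
  calc C ≤ C * S.N := le_mul_of_one_le_right h.C_pos.le S.one_le_N
    _ ≤ S.T * (S.eta * S.sigma0 * (S.sigman ^ 3 * (S.d * Real.sqrt S.d))) := h.C_mul_N_le
    _ ≤ S.T := mul_le_of_le_one_right (by positivity) hscale

lemma T_le_exp_logHorizon : (S.T : ℝ) ≤ Real.exp S.logHorizon := by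
  have hT := h.one_le_T
  have hE := h.two_le_unionRatio
  rw [logHorizon_eq, Real.exp_log (by positivity)]
  exact le_mul_of_one_le_right (by positivity) (by linarith)

lemma one_le_logNoise : 1 ≤ S.logNoise := by
  rw [logNoise_eq]
  exact one_le_log_of_sixteen_le (by linarith [h.two_le_unionRatio])

lemma logNoise_le_logHorizon : S.logNoise ≤ S.logHorizon := by
  have hE := h.two_le_unionRatio
  rw [logNoise_eq, logHorizon_eq]
  refine Real.log_le_log (by positivity) ?_
  gcongr
  linarith [h.C_ge, h.C_le_T]

lemma one_le_logHorizon : 1 ≤ S.logHorizon := h.one_le_logNoise.trans h.logNoise_le_logHorizon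

lemma one_le_logHorizonDim : 1 ≤ S.logHorizonDim :=
  h.one_le_logHorizon.trans h.logHorizon_le_logHorizonDim

lemma log_cross_le : Real.log ((16 : ℝ) * S.N ^ 2 * S.P ^ 2 / S.delta) ≤ 2 * S.logHorizon := by
  have hN := S.one_le_N
  have hP := S.one_le_P
  have hδ := S.hdelta0
  have hT : 16 ≤ (S.T : ℝ) ^ 2 :=
    (show (16 : ℝ) ≤ S.T by linarith [h.C_ge, h.C_le_T]).trans
      (le_self_pow₀ h.one_le_T two_ne_zero)
  have hm : 1 ≤ (S.m : ℝ) ^ 2 / S.delta :=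
    (one_le_div hδ).2 (S.hdelta1.le.trans (one_le_pow₀ S.one_le_m))
  have hsq : 2 * S.logHorizon = Real.log ((S.T * S.unionRatio) ^ 2) := by
    rw [logHorizon_eq, Real.log_pow]
    norm_num
  rw [hsq]
  refine Real.log_le_log (by positivity) ?_
  calc (16 : ℝ) * S.N ^ 2 * S.P ^ 2 / S.delta = 16 * 1 * (S.N ^ 2 * S.P ^ 2 / S.delta) := by ring
    _ ≤ S.T ^ 2 * (S.m ^ 2 / S.delta) * (S.N ^ 2 * S.P ^ 2 / S.delta) := by gcongr
    _ = (S.T * S.unionRatio) ^ 2 := by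
        rw [unionRatio]
        ring

lemma log_init_le : Real.log ((16 : ℝ) * S.m / S.delta) ≤ S.logHorizon := by
  have hm := S.one_le_m
  have hδ := S.hdelta0
  have hNP : (1 : ℝ) ≤ S.N * S.P := one_le_mul_of_one_le_of_one_le S.one_le_N S.one_le_P
  refine Real.log_le_log (by positivity) ?_
  calc (16 : ℝ) * S.m / S.delta = 16 * 1 * (S.m / S.delta) := by ring
    _ ≤ S.T * (S.N * S.P) * (S.m / S.delta) := by
        gcongr
        linarith [h.C_ge, h.C_le_T]
    _ = S.T * S.N * S.m * S.P / S.delta := by ring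

/-! ### Sample size, width and adversarial budget -/

lemma card_SU_le_log : C * S.SU.card ≤ Real.log S.d := by
  have hN : (0 : ℝ) < S.N := Nat.cast_pos.2 S.hN
  have hpun := h.sparse.2.1
  rw [pun, div_le_div_iff_of_pos_right hN] at hpun
  rwa [← le_inv_mul_iff₀ h.C_pos]

lemma card_SU_le : C * S.SU.card ≤ S.N := by
  have hC := h.C_pos
  have hmP : (1 : ℝ) ≤ S.m * S.P := one_le_mul_of_one_le_of_one_le S.one_le_m S.one_le_P
  calc C * S.SU.card ≤ Real.log S.d := h.card_SU_le_log
    _ ≤ S.logHorizonDim := by linarith [h.logHorizonDim_eq_add, h.logHorizon_pos]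
    _ ≤ C * (S.m * S.P) * S.logHorizonDim :=
        le_mul_of_one_le_left h.logHorizonDim_pos.le
          (one_le_mul_of_one_le_of_one_le (by linarith [h.C_ge]) hmP)
    _ = C * S.m * S.P * S.logHorizonDim := by ring
    _ ≤ S.N := h.sparse.2.2

lemma pun_lt_one : S.pun < 1 := by
  have hN : (0 : ℝ) < S.N := Nat.cast_pos.2 S.hN
  rw [pun, div_lt_one hN]
  have hcard : (0 : ℝ) ≤ S.SU.card := by positivity
  linarith [mul_le_mul_of_nonneg_right h.C_ge hcard, h.card_SU_le]

lemma C_mul_eps_le : C * S.eps ≤ S.alpha := by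
  obtain ⟨-, -, -, -, -, -, -, heps, -⟩ := h.condH
  have hC := h.C_pos
  rw [← le_inv_mul_iff₀ hC]
  exact heps.le.trans (by gcongr; exact min_le_left _ _)

lemma C_mul_eps_sigma0_le : C * (S.eps * (S.m * S.sigma0 * S.d)) ≤ 1 := by
  obtain ⟨-, -, -, -, -, -, -, heps, -⟩ := h.condH
  have hC := h.C_pos
  have hσ0 := S.hsigma0
  have hm := S.one_le_m
  have hd := S.one_le_d
  rw [← le_inv_mul_iff₀ hC, ← le_div_iff₀ (by positivity), mul_div_assoc]
  exact heps.le.trans (by gcongr; exact min_le_right _ _)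

lemma patches_le : (S.P : ℝ) ≤ C := by
  obtain ⟨-, -, -, -, -, -, -, -, -, -, -, hP⟩ := h.condH
  exact hP

lemma C_le_two_mul_m : C ≤ 2 * S.m := by
  obtain ⟨-, -, -, -, -, -, -, -, hwidth, -, hP, -⟩ := h.condH
  have hP' : (2 : ℝ) ≤ S.P := Nat.ofNat_le_cast.2 hP
  have hlog : 1 / 2 ≤ Real.log ((S.N : ℝ) * S.P / S.delta) := by
    refine half_le_log_of_two_le ?_
    rw [le_div_iff₀ S.hdelta0]
    linarith [S.hdelta1, le_mul_of_one_le_left (zero_le_two.trans hP') S.one_le_N]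
  linarith [mul_le_mul_of_nonneg_left hlog h.C_pos.le]

/-! ### Derived bounds -/

lemma cube_mul_cube_le_signalToNoise : C ^ 3 * S.logHorizon ^ 3 ≤ S.signalToNoise := by
  obtain ⟨-, -, -, hα, -⟩ := h.condH
  have hC := h.C_pos
  have hL := h.logHorizon_pos
  have hσ := S.hsigman
  have hα0 := S.halpha
  have hN : (0 : ℝ) < S.N := Nat.cast_pos.2 S.hN
  have hd : (0 : ℝ) < S.d := Nat.cast_pos.2 S.hd
  have hlearn : 0 < S.N * (1 - S.pun) := mul_pos hN (sub_pos.2 h.pun_lt_one)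
  have hpun : 0 ≤ S.pun := by
    rw [pun]
    positivity
  have hcube : (C * S.sigman * Real.sqrt S.d * S.logHorizon) ^ 3 ≤
      S.alpha ^ 3 * (S.N * (1 - S.pun)) := by
    rw [← Real.rpow_one (S.N * (1 - S.pun)), ← rpow_div_three_pow_three hlearn.le, ← mul_pow]
    exact pow_le_pow_left₀ (by positivity) ((div_le_iff₀ (by positivity)).1 hα) 3
  rw [signalToNoise, le_div_iff₀ (by positivity)]
  calc C ^ 3 * S.logHorizon ^ 3 * (S.sigman ^ 3 * (S.d * Real.sqrt S.d))
      = (C * S.sigman * Real.sqrt S.d * S.logHorizon) ^ 3 := by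
        rw [mul_pow, mul_pow, mul_pow, pow_succ (Real.sqrt S.d), Real.sq_sqrt hd.le]
        ring
    _ ≤ S.alpha ^ 3 * (S.N * (1 - S.pun)) := hcube
    _ ≤ S.alpha ^ 3 * S.N := by
        gcongr
        exact mul_le_of_le_one_right hN.le (by linarith)

lemma C_le_horizon : C ≤ S.eta * S.alpha ^ 2 * S.T * (S.alpha * S.sigma0) := by
  have hη := S.heta
  have hσ0 := S.hsigma0
  have hσ := S.hsigman
  have hd := S.one_le_d
  have hN : (0 : ℝ) < S.N := Nat.cast_pos.2 S.hN
  have hsnr : 1 ≤ S.signalToNoise :=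
    (one_le_mul_of_one_le_of_one_le (one_le_pow₀ (by linarith [h.C_ge]))
      (one_le_pow₀ h.one_le_logHorizon)).trans h.cube_mul_cube_le_signalToNoise
  rw [signalToNoise, one_le_div (by positivity)] at hsnr
  refine le_of_mul_le_mul_right ?_ hN
  calc C * S.N ≤ S.T * (S.eta * S.sigma0 * (S.sigman ^ 3 * (S.d * Real.sqrt S.d))) :=
        h.C_mul_N_le
    _ ≤ S.T * (S.eta * S.sigma0 * (S.alpha ^ 3 * S.N)) := by gcongr
    _ = S.eta * S.alpha ^ 2 * S.T * (S.alpha * S.sigma0) * S.N := by ring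

lemma C_mul_rate_le : C * (S.eta * S.alpha ^ 2) ≤ 1 := by
  have hη := S.heta
  have hC := h.C_pos
  exact (le_mul_of_one_le_right (by positivity) h.one_le_logHorizon).trans h.rate_signal_le

lemma sqrt_dim_mul_logNoise_le :
    Real.sqrt (S.d * S.logNoise) ≤ Real.sqrt S.d * S.logHorizon := by
  rw [Real.sqrt_mul (by positivity)]
  gcongr
  exact Real.sqrt_le_iff.2 ⟨h.logHorizon_pos.le,
    h.logNoise_le_logHorizon.trans (le_self_pow₀ h.one_le_logHorizon two_ne_zero)⟩

lemma noiseScale_pos : 0 < S.noiseScale := by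
  have hℓ := h.one_le_logNoise
  have hσ0 := S.hsigma0
  have hσ := S.hsigman
  have hd := S.one_le_d
  unfold noiseScale
  positivity

end Admissible

end Setting

/-! ### Size of the initialization -/

namespace Setting.Admissible

variable {S : Setting} {C : ℝ} (h : S.Admissible C)

include h

lemma response_le : 27 * S.m * S.P * S.noiseScale ^ 3 ≤ 1 / 100 := by
  have hσ := S.hsigman
  have hσ0 := S.hsigma0
  have hC := h.C_pos
  have hβ := h.noiseScale_pos
  have hm := S.one_le_m
  have hP := S.one_le_P
  set ν := (S.m : ℝ) ^ ((2 : ℝ) / 3) * (S.P : ℝ) ^ ((2 : ℝ) / 3) with hν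
  have hν3 : ν ^ 3 = (S.m * S.P) ^ 2 := by
    rw [hν, mul_pow, rpow_div_three_pow_three (by positivity),
      rpow_div_three_pow_three (by positivity), Real.rpow_two, Real.rpow_two, mul_pow]
  have hβν : C * (S.noiseScale * ν) ≤ 1 :=
    calc C * (S.noiseScale * ν)
        ≤ C * (S.sigma0 * S.sigman * (Real.sqrt S.d * S.logHorizonDim) * ν) := by
          rw [noiseScale]
          gcongr
          exact h.sqrt_dim_mul_logNoise_le.trans
            (mul_le_mul_of_nonneg_left h.logHorizon_le_logHorizonDim (Real.sqrt_nonneg _))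
      _ = C * (S.sigma0 * (ν * S.sigman * Real.sqrt S.d)) * S.logHorizonDim := by ring
      _ ≤ 1 := h.sigma0_noise_le
  have hsmall : S.noiseScale * ν ≤ 1 / 100 := by
    linarith [mul_le_mul_of_nonneg_right h.C_ge (show 0 ≤ S.noiseScale * ν by positivity)]
  calc 27 * S.m * S.P * S.noiseScale ^ 3 = 27 * (S.m * S.P) * S.noiseScale ^ 3 := by ring
    _ ≤ 27 * (S.m * S.P) ^ 2 * S.noiseScale ^ 3 := by
        gcongr
        exact le_self_pow₀ (one_le_mul_of_one_le_of_one_le hm hP) two_ne_zero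
    _ = 27 * (S.noiseScale * ν) ^ 3 := by rw [mul_pow S.noiseScale, hν3]; ring
    _ ≤ 27 * (1 / 100) ^ 3 := by gcongr
    _ ≤ 1 / 100 := by norm_num

lemma alignInit_le : S.m * S.alignInit ^ 3 ≤ 1 / 100 := by
  have hα := S.halpha
  have hσ0 := S.hsigma0
  have hC := h.C_pos
  have hm := S.one_le_m
  have hL := h.one_le_logHorizonDim
  have ha : 0 ≤ S.alignInit := by
    unfold alignInit
    positivity
  set ν := (S.m : ℝ) ^ ((2 : ℝ) / 3) with hν
  have hsqrt : Real.sqrt (2 * Real.log ((16 : ℝ) * S.m / S.delta)) ≤ 2 * S.logHorizonDim := by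
    refine Real.sqrt_le_iff.2 ⟨by positivity, ?_⟩
    linarith [le_self_pow₀ hL two_ne_zero, h.log_init_le, h.logHorizon_le_logHorizonDim]
  have haν : C * (S.alignInit * ν) ≤ 2 :=
    calc C * (S.alignInit * ν) ≤ C * (S.alpha * (S.sigma0 * (2 * S.logHorizonDim)) * ν) := by
          rw [alignInit]
          gcongr
      _ = 2 * (C * (S.sigma0 * (S.alpha * ν)) * S.logHorizonDim) := by ring
      _ ≤ 2 := by linarith [h.sigma0_signal_le]
  have hsmall : S.alignInit * ν ≤ 1 / 10 := by
    linarith [mul_le_mul_of_nonneg_right h.C_ge (show 0 ≤ S.alignInit * ν by positivity)]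
  calc S.m * S.alignInit ^ 3 ≤ S.m ^ 2 * S.alignInit ^ 3 := by
        gcongr
        exact le_self_pow₀ hm two_ne_zero
    _ = (S.alignInit * ν) ^ 3 := by
        rw [mul_pow, hν, rpow_div_three_pow_three (by positivity), Real.rpow_two, mul_comm]
    _ ≤ (1 / 10) ^ 3 := by gcongr
    _ ≤ 1 / 100 := by norm_num

lemma N_mul_P_mul_sqrt_le {z : ℝ} (hz : z ≤ 2 * S.logHorizon) :
    S.N * S.P * Real.sqrt (S.d * z) ≤ S.d / 40 := by
  obtain ⟨-, -, hdim, -⟩ := h.condH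
  have hL := h.one_le_logHorizon
  have hd : (0 : ℝ) < S.d := Nat.cast_pos.2 S.hd
  have hsq : (S.N * S.P : ℝ) ^ 2 * z * 1600 ≤ S.d :=
    calc (S.N * S.P : ℝ) ^ 2 * z * 1600
        ≤ (S.N * S.P : ℝ) ^ 2 * (2 * S.logHorizon ^ 4) * 1600 := by
          gcongr
          exact hz.trans (mul_le_mul_of_nonneg_left (le_self_pow₀ hL four_ne_zero) zero_le_two)
      _ = 3200 * 1 * S.P ^ 2 * S.N ^ 2 * S.logHorizon ^ 4 := by ring
      _ ≤ C * S.m ^ 2 * S.P ^ 2 * S.N ^ 2 * S.logHorizon ^ 4 := by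
          have hC := h.C_pos
          gcongr
          · linarith [h.C_ge]
          · exact one_le_pow₀ S.one_le_m
      _ ≤ S.d := hdim
  rw [← Real.sqrt_sq (show (0 : ℝ) ≤ S.N * S.P by positivity),
    ← Real.sqrt_mul (sq_nonneg _)]
  refine Real.sqrt_le_iff.2 ⟨by positivity, ?_⟩
  linarith [mul_le_mul_of_nonneg_left hsq hd.le]

lemma test_le : C * (S.m * S.P * (3 * S.sigma0 * S.d * S.sigman)) ≤ 6 := by
  have hσ0 := S.hsigma0
  have hσ := S.hsigman
  have hC := h.C_pos
  have hm : (0 : ℝ) < S.m := Nat.cast_pos.2 S.hm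
  have hsqrt : Real.sqrt S.P ≤ 2 * S.m :=
    (Real.sqrt_le_iff.2 ⟨by positivity, le_self_pow₀ S.one_le_P two_ne_zero⟩).trans
      (h.patches_le.trans h.C_le_two_mul_m)
  have hscale : C * (S.sigma0 * (S.sigman * S.m ^ 2 * Real.sqrt S.P * S.d)) ≤ 1 :=
    (le_mul_of_one_le_right (by positivity) h.one_le_logHorizonDim).trans h.sigma0_test_le
  refine le_of_mul_le_mul_right ?_ hm
  calc C * (S.m * S.P * (3 * S.sigma0 * S.d * S.sigman)) * S.m
      = 3 * (C * (S.sigma0 * (S.sigman * S.m ^ 2 * Real.sqrt S.P * S.d))) * Real.sqrt S.P := by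
        nth_rw 1 [← Real.mul_self_sqrt (show (0 : ℝ) ≤ S.P by positivity)]
        ring
    _ ≤ 3 * 1 * (2 * S.m) := by gcongr
    _ = 6 * S.m := by ring

/-! ### Gradient-weight budgets -/

lemma four_mul_logHorizon_le : 4 * S.logHorizon ≤ C * S.d := by
  obtain ⟨-, -, hdim, -⟩ := h.condH
  have hC := h.C_pos
  have hL := h.one_le_logHorizon
  have hm := one_le_pow₀ S.one_le_m (n := 2)
  have hP := one_le_pow₀ S.one_le_P (n := 2)
  have hN := one_le_pow₀ S.one_le_N (n := 2)
  have hLd : S.logHorizon ≤ S.d :=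
    calc S.logHorizon ≤ S.logHorizon ^ 4 := le_self_pow₀ hL four_ne_zero
      _ = 1 * 1 * 1 * 1 * S.logHorizon ^ 4 := by ring
      _ ≤ C * S.m ^ 2 * S.P ^ 2 * S.N ^ 2 * S.logHorizon ^ 4 := by
          gcongr
          linarith [h.C_ge]
      _ ≤ S.d := hdim
  have hd : 4 * (S.d : ℝ) ≤ C * S.d := by
    gcongr
    linarith [h.C_ge]
  linarith

lemma potentialCap_sq_le_exp : 12 * S.potentialCap ^ 2 ≤ Real.exp (C * S.d) := by
  have hη := S.heta
  have hα := S.halpha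
  have hT : 10 ^ 6 ≤ (S.T : ℝ) := h.C_ge.trans h.C_le_T
  have hrate : S.eta * S.alpha ^ 2 ≤ 1 := by
    linarith [h.C_mul_rate_le, mul_le_mul_of_nonneg_right h.C_ge
      (show 0 ≤ S.eta * S.alpha ^ 2 by positivity)]
  have hcap : S.potentialCap ≤ 1000 * S.T := by
    have := mul_le_mul_of_nonneg_right hrate (zero_le_one.trans h.one_le_T)
    rw [potentialCap]
    linarith
  have hcap0 : 0 ≤ S.potentialCap := by
    unfold potentialCap
    positivity
  calc 12 * S.potentialCap ^ 2 ≤ 12 * (1000 * S.T) ^ 2 := by gcongr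
    _ = 12 * 10 ^ 6 * (S.T : ℝ) ^ 2 := by ring
    _ ≤ (S.T : ℝ) ^ 2 * (S.T : ℝ) ^ 2 := by
        gcongr
        linarith [pow_le_pow_left₀ (by norm_num) hT 2]
    _ = (S.T : ℝ) ^ 4 := by ring
    _ ≤ Real.exp S.logHorizon ^ 4 := by
        gcongr
        exact h.T_le_exp_logHorizon
    _ = Real.exp (4 * S.logHorizon) := by rw [← Real.exp_nat_mul]; norm_num
    _ ≤ Real.exp (C * S.d) := Real.exp_le_exp.2 h.four_mul_logHorizon_le

lemma T_mul_le_N : S.T * (1000 * S.eta * S.m * S.P * S.sigma0 ^ 4 * S.sigman ^ 6 *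
    (S.d : ℝ) ^ 3 * S.logNoise ^ 2) ≤ S.N := by
  have hη := S.heta
  have hσ0 := S.hsigma0
  have hσ := S.hsigman
  have hm := S.one_le_m
  have hP := S.one_le_P
  have hd := S.one_le_d
  have hℓ : 0 < Real.log ((16 : ℝ) * S.N * S.m * S.P / S.delta) :=
    zero_lt_one.trans_le h.one_le_logNoise
  have hT := h.T_le_Tmax
  rwa [Tmax, le_div_iff₀ (by positivity)] at hT

lemma unlearnable_budget :
    S.T * (S.eta * (27 / 4 * (S.m * S.P * S.noiseScale ^ 3))) ≤ S.weightBudget := by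
  have hη := S.heta
  have hσ := S.hsigman
  have hβ := h.noiseScale_pos
  have hℓ := h.one_le_logNoise
  have hd := S.one_le_d
  have hβ4 : S.noiseScale ^ 4 = S.sigma0 ^ 4 * S.sigman ^ 4 * (S.d * S.logNoise) ^ 2 := by
    have hsqrt : Real.sqrt (S.d * S.logNoise) ^ 4 = (S.d * S.logNoise) ^ 2 := by
      rw [show 4 = 2 * 2 from rfl, pow_mul, Real.sq_sqrt (by positivity)]
    rw [noiseScale, mul_pow, mul_pow, hsqrt]
  rw [weightBudget, le_div_iff₀ (by positivity)]
  calc S.T * (S.eta * (27 / 4 * (S.m * S.P * S.noiseScale ^ 3))) *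
        (42 * S.noiseScale * S.sigman ^ 2 * S.d)
      = 567 / 2 * (S.T * S.eta * S.m * S.P * S.noiseScale ^ 4 * S.sigman ^ 2 * S.d) := by ring
    _ ≤ 1000 * (S.T * S.eta * S.m * S.P * S.noiseScale ^ 4 * S.sigman ^ 2 * S.d) := by
        gcongr
        norm_num
    _ = S.T * (1000 * S.eta * S.m * S.P * S.sigma0 ^ 4 * S.sigman ^ 6 * (S.d : ℝ) ^ 3 *
        S.logNoise ^ 2) := by
        rw [hβ4]
        ring
    _ ≤ S.N := h.T_mul_le_N

lemma million_mul_cube_le_signalToNoise : 10 ^ 6 * S.logHorizon ^ 3 ≤ S.signalToNoise := by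
  have hL := h.logHorizon_pos
  refine le_trans ?_ h.cube_mul_cube_le_signalToNoise
  gcongr
  exact h.C_ge.trans (le_self_pow₀ (by linarith [h.C_ge]) three_ne_zero)

lemma rpow_one_third_sq_mul_le : ((S.m : ℝ) ^ ((1 : ℝ) / 3)) ^ 2 * (S.alpha * S.sigma0) ≤ 1 := by
  have hα := S.halpha
  have hσ0 := S.hsigma0
  have hm := S.one_le_m
  have hsq : ((S.m : ℝ) ^ ((1 : ℝ) / 3)) ^ 2 = (S.m : ℝ) ^ ((2 : ℝ) / 3) := by
    rw [← Real.rpow_mul_natCast (by positivity)]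
    norm_num
  rw [hsq, show (S.m : ℝ) ^ ((2 : ℝ) / 3) * (S.alpha * S.sigma0) =
    S.sigma0 * (S.alpha * (S.m : ℝ) ^ ((2 : ℝ) / 3)) by ring]
  exact le_one_of_mul_mul_le_one (by linarith [h.C_ge])
    (by linarith [h.one_le_logHorizonDim]) (by positivity) h.sigma0_signal_le

lemma alpha_mul_sigma0_le_one : S.alpha * S.sigma0 ≤ 1 := by
  have hα := S.halpha
  have hσ0 := S.hsigma0
  exact (le_mul_of_one_le_left (by positivity) (one_le_pow₀
    (Real.one_le_rpow S.one_le_m (by norm_num)))).trans h.rpow_one_third_sq_mul_le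

lemma horizon_le_signalToNoise : 432 * (S.eta * S.alpha ^ 2) * S.T ≤
    1 / 2 * (S.signalToNoise ^ 2 / (S.alpha * S.sigma0) ^ 4) := by
  have hη := S.heta
  have hα := S.halpha
  have hσ0 := S.hsigma0
  have hσ := S.hsigman
  have hN := S.one_le_N
  have hd : (0 : ℝ) < S.d := Nat.cast_pos.2 S.hd
  have hratio : S.signalToNoise ^ 2 / (S.alpha * S.sigma0) ^ 4 =
      S.alpha ^ 2 * S.N ^ 2 / (S.sigma0 ^ 4 * (S.sigman ^ 6 * (S.d : ℝ) ^ 3)) := by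
    rw [signalToNoise, div_pow, mul_pow (S.sigman ^ 3), mul_pow (S.d : ℝ), Real.sq_sqrt hd.le]
    field_simp
  rw [hratio, mul_div_assoc', le_div_iff₀ (by positivity)]
  calc 432 * (S.eta * S.alpha ^ 2) * S.T * (S.sigma0 ^ 4 * (S.sigman ^ 6 * (S.d : ℝ) ^ 3))
      = 432 / 1000 * S.alpha ^ 2 * (S.T * (1000 * S.eta * 1 * 1 * S.sigma0 ^ 4 *
          S.sigman ^ 6 * (S.d : ℝ) ^ 3 * 1 ^ 2)) := by ring
    _ ≤ 432 / 1000 * S.alpha ^ 2 * (S.T * (1000 * S.eta * S.m * S.P * S.sigma0 ^ 4 *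
          S.sigman ^ 6 * (S.d : ℝ) ^ 3 * S.logNoise ^ 2)) := by
        gcongr
        · exact S.one_le_m
        · exact S.one_le_P
        · exact h.one_le_logNoise
    _ ≤ 432 / 1000 * S.alpha ^ 2 * S.N := by
        gcongr
        exact h.T_mul_le_N
    _ ≤ 1 / 2 * (S.alpha ^ 2 * S.N ^ 2) := by
        linarith [mul_le_mul_of_nonneg_left (le_self_pow₀ hN two_ne_zero) (sq_nonneg S.alpha),
          show 0 ≤ S.alpha ^ 2 * (S.N : ℝ) ^ 2 by positivity]

lemma potentialCap_le_signalToNoise :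
    S.potentialCap ≤ S.signalToNoise ^ 2 / (S.alpha * S.sigma0) ^ 4 := by
  have hα := S.halpha
  have hσ0 := S.hsigma0
  have hsnr : 10 ^ 6 ≤ S.signalToNoise := by
    linarith [h.million_mul_cube_le_signalToNoise, one_le_pow₀ h.one_le_logHorizon (n := 3)]
  have hfour : 4 ≤ S.signalToNoise ^ 2 / (S.alpha * S.sigma0) ^ 4 := by
    rw [le_div_iff₀ (by positivity)]
    linarith [le_self_pow₀ (show 1 ≤ S.signalToNoise by linarith) two_ne_zero,
      pow_le_one₀ (n := 4) (by positivity) h.alpha_mul_sigma0_le_one]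
  rw [potentialCap]
  linarith [h.horizon_le_signalToNoise]

lemma signalToNoise_div_le_weightBudget :
    S.signalToNoise / (42 * (S.alpha * S.sigma0) * S.logHorizon) ≤
      S.alpha ^ 2 * S.weightBudget := by
  have hα := S.halpha
  have hσ0 := S.hsigma0
  have hσ := S.hsigman
  have hβ := h.noiseScale_pos
  have hL := h.logHorizon_pos
  have hd := S.one_le_d
  rw [signalToNoise, weightBudget, mul_div_assoc', div_div,
    div_le_div_iff₀ (by positivity) (by positivity)]
  calc S.alpha ^ 3 * S.N * (42 * S.noiseScale * S.sigman ^ 2 * S.d)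
      ≤ S.alpha ^ 3 * S.N * (42 * (S.sigma0 * S.sigman * (Real.sqrt S.d * S.logHorizon)) *
          S.sigman ^ 2 * S.d) := by
        rw [noiseScale]
        gcongr
        exact h.sqrt_dim_mul_logNoise_le
    _ = S.alpha ^ 2 * S.N * (S.sigman ^ 3 * (S.d * Real.sqrt S.d) *
          (42 * (S.alpha * S.sigma0) * S.logHorizon)) := by ring

lemma learnable_budget {V : ℝ} (hV : V ^ 8 ≤ S.potentialCap) :
    10 / (S.alpha * S.sigma0) + 5 * V * (S.m : ℝ) ^ ((1 : ℝ) / 3) ≤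
      S.alpha ^ 2 * S.weightBudget := by
  have hα := S.halpha
  have hσ0 := S.hsigma0
  have hq : 0 < S.alpha * S.sigma0 := mul_pos hα hσ0
  have hL := h.one_le_logHorizon
  have hsnr := h.million_mul_cube_le_signalToNoise
  refine le_trans ?_ h.signalToNoise_div_le_weightBudget
  rw [le_div_iff₀ (by positivity)]
  calc (10 / (S.alpha * S.sigma0) + 5 * V * (S.m : ℝ) ^ ((1 : ℝ) / 3)) *
        (42 * (S.alpha * S.sigma0) * S.logHorizon)
      = 420 * S.logHorizon +
        420 * (V * (S.m : ℝ) ^ ((1 : ℝ) / 3) * (S.alpha * S.sigma0) * S.logHorizon) / 2 := by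
        field_simp
        ring
    _ ≤ S.signalToNoise := by
        linarith [mul_le_of_pow_eight_le hq hL hsnr h.rpow_one_third_sq_mul_le
          (hV.trans h.potentialCap_le_signalToNoise), le_self_pow₀ hL three_ne_zero]

end Setting.Admissible

namespace Setting

/-! ### Gradient weights -/

section Amplitude

variable (S : Setting) (t : ℕ) {i : Fin S.N} (hi : i ∈ S.SL)

include hi

lemma advAmp_le_one : S.advAmp t i ≤ 1 := by
  rw [advAmp, div_le_one S.halpha]
  exact (S.hadvlearn t i hi).2

lemma advAmp_nonneg : 0 ≤ S.advAmp t i :=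
  div_nonneg ((sub_nonneg.2 S.hepsalpha.le).trans (S.hadvlearn t i hi).1) S.halpha.le

lemma advAmp_pow_three_le_one : S.advAmp t i ^ 3 ≤ 1 :=
  pow_le_one₀ (S.advAmp_nonneg t hi) (S.advAmp_le_one t hi)

end Amplitude

/-- All noise responses at time `t` are at most three times `noiseScale`; at initialization the
factor is two. -/
def Quiet (S : Setting) (t : ℕ) : Prop :=
  ∀ r i j, j ≠ S.sig i → |dot (S.w t r) (S.x i j)| ≤ 3 * S.noiseScale

lemma card_SL_add_card_SU (S : Setting) : (#S.SL : ℝ) + #S.SU = S.N := by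
  have h := card_union_of_disjoint S.hdisj
  rw [S.hunion, card_univ, Fintype.card_fin] at h
  exact_mod_cast h.symm

lemma one_le_potentialCap (S : Setting) : 1 ≤ S.potentialCap := by
  have hη := S.heta
  have : 0 ≤ 432 * (S.eta * S.alpha ^ 2) * S.T := by positivity
  rw [potentialCap]
  linarith

namespace Admissible

variable {S : Setting} {C : ℝ} {fT : Fin S.N → ℝ} (h : S.Admissible C) {t : ℕ} {i : Fin S.N}

include h

lemma le_card_SL : 9 / 10 * (S.N : ℝ) ≤ #S.SL := by
  have hSU := mul_le_mul_of_nonneg_right h.C_ge (Nat.cast_nonneg (α := ℝ) #S.SU)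
  linarith [h.card_SU_le, S.card_SL_add_card_SU, Nat.cast_nonneg (α := ℝ) S.N]

lemma le_advAmp_pow_three (t : ℕ) (hi : i ∈ S.SL) : 15 / 16 + 1 / 100 ≤ S.advAmp t i ^ 3 := by
  have hε : 10 ^ 6 * S.eps ≤ S.alpha :=
    (mul_le_mul_of_nonneg_right h.C_ge S.heps.le).trans h.C_mul_eps_le
  have hamp : 99 / 100 ≤ S.advAmp t i := by
    rw [advAmp, le_div_iff₀ S.halpha]
    linarith [(S.hadvlearn t i hi).1, S.heps, S.halpha]
  calc (15 / 16 + 1 / 100 : ℝ) ≤ (99 / 100) ^ 3 := by norm_num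
    _ ≤ S.advAmp t i ^ 3 := pow_le_pow_left₀ (by norm_num) hamp 3

lemma abs_noiseMarg_le (hq : S.Quiet t) (i : Fin S.N) :
    |S.noiseMarg t i| ≤ 27 * S.m * S.P * S.noiseScale ^ 3 := by
  refine (S.abs_noiseMarg_le (mul_nonneg zero_le_three h.noiseScale_pos.le)
    fun r j hj => hq r i j hj).trans (le_of_eq ?_)
  ring

lemma abs_noiseMarg_le_one_div (hq : S.Quiet t) (i : Fin S.N) : |S.noiseMarg t i| ≤ 1 / 100 :=
  (h.abs_noiseMarg_le hq i).trans h.response_le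

section Learnable

variable (hq : S.Quiet t) (hi : i ∈ S.SL) (hF : -(1 / 50) ≤ cubeSum (S.align t))

include hq hi hF

lemma le_marg : 15 / 16 * max (cubeSum (S.align t)) 0 - 1 / 25 ≤ S.marg t i := by
  have hnoise := (abs_le.1 (h.abs_noiseMarg_le_one_div hq i)).1
  rw [S.marg_of_mem_SL t hi]
  rcases le_total 0 (cubeSum (S.align t)) with h0 | h0
  · rw [max_eq_left h0]
    linarith [mul_le_mul_of_nonneg_right (h.le_advAmp_pow_three t hi) h0]
  · rw [max_eq_right h0]
    linarith [mul_le_mul_of_nonpos_right (S.advAmp_pow_three_le_one t hi) h0]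

omit hF in
lemma marg_le : S.marg t i ≤ max (cubeSum (S.align t)) 0 + 1 / 100 := by
  have hnoise := (abs_le.1 (h.abs_noiseMarg_le_one_div hq i)).2
  have hamp : 0 ≤ S.advAmp t i ^ 3 := pow_nonneg (S.advAmp_nonneg t hi) 3
  rw [S.marg_of_mem_SL t hi]
  have hmax := mul_le_mul_of_nonneg_left (le_max_left (cubeSum (S.align t)) 0) hamp
  linarith [mul_le_of_le_one_left (le_max_right (cubeSum (S.align t)) 0)
    (S.advAmp_pow_three_le_one t hi)]

lemma gAD_le : S.gAD fT t i ≤ 5 / 4 * Real.exp (-(15 / 16 * max (cubeSum (S.align t)) 0)) :=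
  calc S.gAD fT t i ≤ Real.sigmoid (-S.marg t i) := by
        rw [gAD_eq_sigmoid_sub, Real.sigmoid_neg]
        linarith [Real.sigmoid_le_one (S.y i * fT i)]
    _ ≤ Real.exp (-S.marg t i) := sigmoid_le_exp _
    _ ≤ Real.exp (1 / 25 + -(15 / 16 * max (cubeSum (S.align t)) 0)) :=
        Real.exp_le_exp.2 (by linarith [h.le_marg hq hi hF])
    _ ≤ 5 / 4 * Real.exp (-(15 / 16 * max (cubeSum (S.align t)) 0)) := by
        rw [Real.exp_add]
        gcongr
        exact exp_le_five_quarters le_rfl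

end Learnable

lemma signalStep_le (hq : S.Quiet t) (hF : -(1 / 50) ≤ cubeSum (S.align t)) :
    S.signalStep fT t ≤ 4 * (S.eta * S.alpha ^ 2) * Real.exp (-(9 / 10 * cubeSum (S.align t))) := by
  have hη := S.heta
  have hN : (0 : ℝ) < S.N := Nat.cast_pos.2 S.hN
  have hterm : ∀ i ∈ S.SL, S.gAD fT t i * S.advAmp t i ^ 3 ≤
      5 / 4 * Real.exp (-(9 / 10 * cubeSum (S.align t))) * 1 := fun i hi => by
    have hexp : -(15 / 16 * max (cubeSum (S.align t)) 0) ≤ -(9 / 10 * cubeSum (S.align t)) := by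
      linarith [le_max_left (cubeSum (S.align t)) 0, le_max_right (cubeSum (S.align t)) 0]
    refine mul_le_mul ((h.gAD_le hq hi hF).trans ?_) (S.advAmp_pow_three_le_one t hi)
      (pow_nonneg (S.advAmp_nonneg t hi) 3) (by positivity)
    gcongr
  calc S.signalStep fT t
      ≤ 3 * (S.eta * S.alpha ^ 2) / S.N *
        (#S.SL * (5 / 4 * Real.exp (-(9 / 10 * cubeSum (S.align t))) * 1)) := by
        rw [signalStep, ← nsmul_eq_mul #S.SL]
        gcongr
        exact sum_le_card_nsmul _ _ _ hterm
    _ ≤ 3 * (S.eta * S.alpha ^ 2) / S.N *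
        (S.N * (5 / 4 * Real.exp (-(9 / 10 * cubeSum (S.align t))) * 1)) := by
        gcongr
        exact (card_le_univ _).trans_eq (Fintype.card_fin _)
    _ = 15 / 4 * (S.eta * S.alpha ^ 2 * Real.exp (-(9 / 10 * cubeSum (S.align t)))) := by
        field_simp
        ring
    _ ≤ 4 * (S.eta * S.alpha ^ 2) * Real.exp (-(9 / 10 * cubeSum (S.align t))) := by
        linarith [show 0 ≤ S.eta * S.alpha ^ 2 * Real.exp (-(9 / 10 * cubeSum (S.align t))) by
          positivity]

end Admissible

lemma exp_max_half_le {F U : ℝ} (hU : Real.exp (F / 2) ≤ U) (hU1 : 1 ≤ U) :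
    Real.exp (max F 0 / 2) ≤ U := by
  rcases max_choice F 0 with hmax | hmax
  · rwa [hmax]
  · rwa [hmax, zero_div, Real.exp_zero]

/-- A run of adversarial distillation under a Good Teacher, on the event `E` and in the parameter
regime of the theorem. The fields `margin_SL` and `margin_SU` are the two Good Teacher
conditions. -/
structure GoodTeacherRun (S : Setting) (fT : Fin S.N → ℝ) (C : ℝ) : Prop extends
    S.Admissible C where
  dyn : S.ADDyn fT
  event : S.EventE
  margin_SL : ∀ i ∈ S.SL, C * S.d ≤ S.y i * fT i
  margin_SU : ∀ i ∈ S.SU, S.y i * fT i = 0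

namespace GoodTeacherRun

variable {S : Setting} {fT : Fin S.N → ℝ} {C : ℝ} (h : S.GoodTeacherRun fT C)

include h

lemma sigmoid_neg_teacher_le {t : ℕ} {i : Fin S.N} (hi : i ∈ S.SL)
    (hU : Real.exp (cubeSum (S.align t) / 2) ≤ S.potentialCap) :
    Real.sigmoid (-(S.y i * fT i)) ≤ Real.exp (-max (cubeSum (S.align t)) 0) / 12 := by
  set F := cubeSum (S.align t)
  have hF : 12 * Real.exp (max F 0) ≤ Real.exp (S.y i * fT i) :=
    calc 12 * Real.exp (max F 0) = 12 * Real.exp (max F 0 / 2) ^ 2 := by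
          rw [← Real.exp_nat_mul]
          congr 2
          push_cast
          ring
      _ ≤ 12 * S.potentialCap ^ 2 := by
          gcongr
          exact exp_max_half_le hU S.one_le_potentialCap
      _ ≤ Real.exp (C * S.d) := h.potentialCap_sq_le_exp
      _ ≤ Real.exp (S.y i * fT i) := Real.exp_le_exp.2 (h.margin_SL i hi)
  calc Real.sigmoid (-(S.y i * fT i)) ≤ Real.exp (-(S.y i * fT i)) := sigmoid_le_exp _
    _ = (Real.exp (S.y i * fT i))⁻¹ := Real.exp_neg _
    _ ≤ (12 * Real.exp (max F 0))⁻¹ := inv_anti₀ (by positivity) hF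
    _ = Real.exp (-max F 0) / 12 := by
        rw [Real.exp_neg]
        field_simp

lemma le_gAD {t : ℕ} (hq : S.Quiet t) {i : Fin S.N} (hi : i ∈ S.SL)
    (hU : Real.exp (cubeSum (S.align t) / 2) ≤ S.potentialCap) :
    2 / 5 * Real.exp (-max (cubeSum (S.align t)) 0) ≤ S.gAD fT t i := by
  have hteacher := h.sigmoid_neg_teacher_le hi hU
  have hmarg := h.marg_le hq hi
  set F := cubeSum (S.align t)
  have hsigmoid : 99 / 200 * Real.exp (-max F 0) ≤ Real.sigmoid (-S.marg t i) :=
    calc 99 / 200 * Real.exp (-max F 0)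
        ≤ Real.exp (-(1 / 100)) * Real.exp (-max F 0) / 2 := by
          linarith [mul_le_mul_of_nonneg_right (Real.add_one_le_exp (-(1 / 100)))
            (Real.exp_pos (-max F 0)).le]
      _ = Real.exp (-(max F 0 + 1 / 100)) / 2 := by
          rw [← Real.exp_add]
          ring_nf
      _ ≤ Real.sigmoid (-(max F 0 + 1 / 100)) :=
          half_exp_le_sigmoid (by linarith [le_max_right F 0])
      _ ≤ Real.sigmoid (-S.marg t i) := Real.sigmoid_monotone (neg_le_neg hmarg)
  rw [Real.sigmoid_neg] at hteacher hsigmoid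
  rw [gAD_eq_sigmoid_sub]
  linarith [Real.exp_pos (-max F 0)]

lemma le_signalStep {t : ℕ} (hq : S.Quiet t)
    (hU : Real.exp (cubeSum (S.align t) / 2) ≤ S.potentialCap) :
    S.eta * S.alpha ^ 2 / 2 * Real.exp (-max (cubeSum (S.align t)) 0) ≤ S.signalStep fT t := by
  have hη := S.heta
  have hN : (0 : ℝ) < S.N := Nat.cast_pos.2 S.hN
  set E := Real.exp (-max (cubeSum (S.align t)) 0)
  have hE : 0 < E := Real.exp_pos _
  have hterm : ∀ i ∈ S.SL, 2 / 5 * E * (15 / 16) ≤ S.gAD fT t i * S.advAmp t i ^ 3 :=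
    fun i hi => mul_le_mul (h.le_gAD hq hi hU) (by linarith [h.le_advAmp_pow_three t hi])
      (by norm_num) (le_trans (by positivity) (h.le_gAD hq hi hU))
  calc S.eta * S.alpha ^ 2 / 2 * E ≤ 81 / 80 * (S.eta * S.alpha ^ 2 * E) := by
        linarith [show 0 ≤ S.eta * S.alpha ^ 2 * E by positivity]
    _ = 3 * (S.eta * S.alpha ^ 2) / S.N * (9 / 10 * S.N * (2 / 5 * E * (15 / 16))) := by
        field_simp
        ring
    _ ≤ 3 * (S.eta * S.alpha ^ 2) / S.N * (#S.SL * (2 / 5 * E * (15 / 16))) := by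
        gcongr
        exact h.le_card_SL
    _ ≤ S.signalStep fT t := by
        rw [signalStep, ← nsmul_eq_mul #S.SL]
        gcongr
        exact card_nsmul_le_sum _ _ _ hterm

/-! ### Noise responses stay at initialization scale -/

lemma signalPath {n : ℕ} (hn : n ≤ S.T) (hq : ∀ t < n, S.Quiet t) :
    SignalPath S.align (S.signalStep fT) n S.alignInit (S.eta * S.alpha ^ 2) S.potentialCap where
  a_nonneg := by
    have := S.halpha
    have := S.hsigma0
    unfold alignInit
    positivity
  card_mul_le := by
    rw [Fintype.card_fin]
    exact h.alignInit_le
  abs_init_le r := by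
    obtain ⟨-, -, -, -, hinit, -⟩ := h.event
    have hα := S.halpha
    have hr := hinit r
    rw [dot_e1] at hr
    rw [align, wsig, alignInit, abs_mul, abs_of_pos hα]
    gcongr
  step s _ := h.dyn.align_succ s
  h_pos := mul_pos S.heta (pow_pos S.halpha 2)
  h_le := by
    linarith [h.C_mul_rate_le, mul_le_mul_of_nonneg_right h.C_ge
      (mul_pos S.heta (pow_pos S.halpha 2)).le]
  horizon := by
    have hη := S.heta
    unfold potentialCap
    gcongr
  upper s hs hF := h.signalStep_le (hq s hs) hF
  lower s hs _ hU := h.le_signalStep (hq s hs) hU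

omit fT h in
lemma exists_le_align_init (hE : S.EventE) : ∃ r, S.alpha * S.sigma0 / 2 ≤ S.align 0 r := by
  obtain ⟨-, -, -, -, -, -, ⟨r, hr⟩, -⟩ := hE
  rw [dot_e1] at hr
  refine ⟨r, ?_⟩
  rw [align, wsig, mul_div_assoc]
  exact mul_le_mul_of_nonneg_left hr S.halpha.le

lemma sum_weight_le_of_mem_SU {n : ℕ} (hn : n ≤ S.T) (hq : ∀ t < n, S.Quiet t) {i : Fin S.N}
    (hi : i ∈ S.SU) : ∑ t ∈ range n, S.eta * |S.gAD fT t i| ≤ S.weightBudget := by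
  have hη := S.heta
  have hβ := h.noiseScale_pos
  have hterm : ∀ t ∈ range n, S.eta * |S.gAD fT t i| ≤
      S.eta * (27 / 4 * (S.m * S.P * S.noiseScale ^ 3)) := fun t ht => by
    rw [gAD_eq_sigmoid_sub, h.margin_SU i hi, Real.sigmoid_zero, S.marg_of_mem_SU t hi, ← one_div]
    gcongr
    linarith [abs_half_sub_sigmoid_le (S.noiseMarg t i),
      h.abs_noiseMarg_le (hq t (mem_range.1 ht)) i]
  calc ∑ t ∈ range n, S.eta * |S.gAD fT t i|
      ≤ n * (S.eta * (27 / 4 * (S.m * S.P * S.noiseScale ^ 3))) := by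
        simpa using sum_le_card_nsmul _ _ _ hterm
    _ ≤ S.T * (S.eta * (27 / 4 * (S.m * S.P * S.noiseScale ^ 3))) := by gcongr
    _ ≤ S.weightBudget := h.unlearnable_budget

lemma rate_mul_abs_gAD_le {n : ℕ} (hn : n ≤ S.T) (hq : ∀ t < n, S.Quiet t) {i : Fin S.N}
    (hi : i ∈ S.SL) {s : ℕ} (hs : s < n) :
    S.eta * S.alpha ^ 2 * |S.gAD fT s i| ≤
      4 * S.signalStep fT s * Real.exp (max (cubeSum (S.align s)) 0 / 16) := by
  have hη := S.heta
  have hp := h.signalPath hn hq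
  have hstep := hp.le_stepSize hs
  have hlower := h.le_gAD (hq s hs) hi ((hp.exp_half_le hs.le).trans hp.horizon)
  have hupper := h.gAD_le (fT := fT) (hq s hs) hi (hp.neg_le_cubeSum hs.le)
  rw [abs_of_nonneg (le_trans (by positivity) hlower)]
  set F := cubeSum (S.align s)
  calc S.eta * S.alpha ^ 2 * S.gAD fT s i
      ≤ S.eta * S.alpha ^ 2 * (5 / 4 * Real.exp (-(15 / 16 * max F 0))) := by gcongr
    _ = 5 / 2 * (S.eta * S.alpha ^ 2 / 2 * Real.exp (-max F 0)) * Real.exp (max F 0 / 16) := by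
        rw [show -(15 / 16 * max F 0) = -max F 0 + max F 0 / 16 by ring, Real.exp_add]
        ring
    _ ≤ 4 * (S.eta * S.alpha ^ 2 / 2 * Real.exp (-max F 0)) * Real.exp (max F 0 / 16) := by
        gcongr
        norm_num
    _ ≤ 4 * S.signalStep fT s * Real.exp (max F 0 / 16) := by gcongr

lemma sum_weight_le_of_mem_SL {n : ℕ} (hn : n ≤ S.T) (hq : ∀ t < n, S.Quiet t) {i : Fin S.N}
    (hi : i ∈ S.SL) : ∑ t ∈ range n, S.eta * |S.gAD fT t i| ≤ S.weightBudget := by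
  have hα := S.halpha
  have hσ0 := S.hsigma0
  have hm : (0 : ℝ) < S.m := Nat.cast_pos.2 S.hm
  have hp := h.signalPath hn hq
  obtain ⟨r, hr⟩ := exists_le_align_init h.event
  have hμ : ((S.m : ℝ) ^ ((1 : ℝ) / 3)) ^ 3 = Fintype.card (Fin S.m) := by
    rw [rpow_div_three_pow_three hm.le, Real.rpow_one, Fintype.card_fin]
  set V := Real.exp (max (cubeSum (S.align n)) 0 / 16) with hV
  have hV8 : V ^ 8 ≤ S.potentialCap := by
    rw [hV, ← Real.exp_nat_mul]
    refine le_of_eq_of_le (congr_arg Real.exp ?_)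
      (exp_max_half_le ((hp.exp_half_le le_rfl).trans hp.horizon) S.one_le_potentialCap)
    push_cast
    ring
  have hVmono : ∀ s < n, Real.exp (max (cubeSum (S.align s)) 0 / 16) ≤ V := fun s hs => by
    rw [hV]
    gcongr
    exact cubeSum_mono (hp.mono hs.le le_rfl)
  have hsum := hp.sum_weights_le (by positivity) hr (by positivity) hμ
    (fun s hs => h.rate_mul_abs_gAD_le hn hq hi hs) (Real.exp_pos _).le hVmono
  refine le_of_mul_le_mul_left ?_ (pow_pos hα 2)
  calc S.alpha ^ 2 * ∑ t ∈ range n, S.eta * |S.gAD fT t i|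
      = ∑ t ∈ range n, S.eta * S.alpha ^ 2 * |S.gAD fT t i| := by
        rw [mul_sum]
        exact sum_congr rfl fun t _ => by ring
    _ ≤ 5 / (S.alpha * S.sigma0 / 2) + 5 * V * (S.m : ℝ) ^ ((1 : ℝ) / 3) := hsum
    _ = 10 / (S.alpha * S.sigma0) + 5 * V * (S.m : ℝ) ^ ((1 : ℝ) / 3) := by
        rw [div_div_eq_mul_div]
        norm_num
    _ ≤ S.alpha ^ 2 * S.weightBudget := h.learnable_budget hV8

lemma sum_weight_le {n : ℕ} (hn : n ≤ S.T) (hq : ∀ t < n, S.Quiet t) (i : Fin S.N) :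
    ∑ t ∈ range n, S.eta * |S.gAD fT t i| ≤ S.weightBudget :=
  (S.mem_SL_or_SU i).elim (h.sum_weight_le_of_mem_SL hn hq) (h.sum_weight_le_of_mem_SU hn hq)

lemma abs_dot_sub_init_le {n : ℕ} (hn : n ≤ S.T) (hq : ∀ t < n, S.Quiet t) (r : Fin S.m)
    {z : Fin S.d → ℝ} (hz : dot (e1 S.d S.hd) z = 0) :
    |dot (S.w n r) z - dot (S.w 0 r) z| ≤ 9 / 14 * S.noiseScale / (S.sigman ^ 2 * S.d) *
      ∑ i, ∑ p ∈ univ.erase (S.sig i), |dot (S.x i p) z| := by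
  have hβ := h.noiseScale_pos
  have hσ := S.hsigman
  have hN : (0 : ℝ) < S.N := Nat.cast_pos.2 S.hN
  have hd : (0 : ℝ) < S.d := Nat.cast_pos.2 S.hd
  refine (h.dyn.abs_dot_sub_init_le hz (fun t ht => hq t ht r)
    (h.sum_weight_le hn hq)).trans (le_of_eq ?_)
  rw [weightBudget]
  field_simp
  ring

lemma sum_abs_dot_noise_le (k : Fin S.N) {q : Fin S.P} (hq : q ≠ S.sig k) :
    ∑ i, ∑ p ∈ univ.erase (S.sig i), |dot (S.x i p) (S.x k q)| ≤
      14 / 9 * (S.sigman ^ 2 * S.d) := by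
  obtain ⟨hnorm, hcross, -⟩ := h.event
  have hσ := S.hsigman
  set L := Real.sqrt ((S.d : ℝ) * Real.log ((16 : ℝ) * S.N ^ 2 * S.P ^ 2 / S.delta))
  set D : Fin S.N × Fin S.P → ℝ := Pi.single (k, q) (3 * S.sigman ^ 2 * S.d / 2) with hD
  have : 0 ≤ L := Real.sqrt_nonneg _
  have hD0 : 0 ≤ D := Pi.single_nonneg.2 (by positivity)
  have hterm : ∀ i, ∀ p ∈ univ.erase (S.sig i), |dot (S.x i p) (S.x k q)| ≤
      2 * S.sigman ^ 2 * L + D (i, p) := by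
    intro i p hp
    by_cases hik : (i, p) = (k, q)
    · obtain ⟨rfl, rfl⟩ := Prod.mk.inj hik
      have hself := hnorm i p hq
      rw [hD, Pi.single_eq_same, ← sqnorm, abs_of_nonneg (le_trans (by positivity) hself.1)]
      exact le_add_of_nonneg_of_le (by positivity) hself.2
    · exact le_add_of_le_of_nonneg (hcross i k p q (ne_of_mem_erase hp) hq hik) (hD0 _)
  calc ∑ i, ∑ p ∈ univ.erase (S.sig i), |dot (S.x i p) (S.x k q)|
      ≤ ∑ i, ∑ p ∈ univ.erase (S.sig i), (2 * S.sigman ^ 2 * L + D (i, p)) :=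
        sum_le_sum fun i _ => sum_le_sum fun p hp => hterm i p hp
    _ ≤ ∑ i, ∑ p, (2 * S.sigman ^ 2 * L + D (i, p)) :=
        sum_le_sum fun i _ => sum_le_sum_of_subset_of_nonneg (erase_subset _ _) fun p _ _ =>
          add_nonneg (by positivity) (hD0 _)
    _ = 2 * S.sigman ^ 2 * (S.N * S.P * L) + 3 * S.sigman ^ 2 * S.d / 2 := by
        rw [← sum_product', univ_product_univ, sum_add_distrib, hD, Finset.sum_pi_single']
        simp only [sum_const, card_univ, Fintype.card_prod, Fintype.card_fin, nsmul_eq_mul,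
          Nat.cast_mul, mem_univ, if_true]
        ring
    _ ≤ 2 * S.sigman ^ 2 * (S.d / 40) + 3 * S.sigman ^ 2 * S.d / 2 := by
        gcongr
        exact h.N_mul_P_mul_sqrt_le h.log_cross_le
    _ ≤ 14 / 9 * (S.sigman ^ 2 * S.d) := by
        linarith [show 0 ≤ S.sigman ^ 2 * S.d by positivity]

theorem quiet {n : ℕ} (hn : n ≤ S.T) : S.Quiet n := by
  induction n using Nat.strong_induction_on with
  | _ n ih =>
    intro r k q hq
    have hβ := h.noiseScale_pos
    have hσ := S.hsigman
    have hd : (0 : ℝ) < S.d := Nat.cast_pos.2 S.hd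
    have hz : dot (e1 S.d S.hd) (S.x k q) = 0 := by
      rw [dot_eq_dotProduct, dotProduct_comm]
      exact S.hnoiseU k q hq
    have hinit : |dot (S.w 0 r) (S.x k q)| ≤ 2 * S.noiseScale := by
      obtain ⟨-, -, -, -, -, hinit, -⟩ := h.event
      refine (hinit r k q hq).trans (le_of_eq ?_)
      rw [noiseScale, logNoise]
      ring
    have hdrift : |dot (S.w n r) (S.x k q) - dot (S.w 0 r) (S.x k q)| ≤ S.noiseScale :=
      calc _ ≤ 9 / 14 * S.noiseScale / (S.sigman ^ 2 * S.d) * (14 / 9 * (S.sigman ^ 2 * S.d)) := by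
            refine (h.abs_dot_sub_init_le hn (fun t ht => ih t ht (ht.le.trans hn)) r hz).trans ?_
            gcongr
            exact h.sum_abs_dot_noise_le k hq
        _ = S.noiseScale := by field_simp
    linarith [abs_sub_abs_le_abs_sub (dot (S.w n r) (S.x k q)) (dot (S.w 0 r) (S.x k q))]

end GoodTeacherRun

end Setting

lemma sum_abs_le_sqrt_mul_sqnorm {d : ℕ} (a : Fin d → ℝ) :
    ∑ k, |a k| ≤ Real.sqrt (d * sqnorm a) := by
  refine Real.le_sqrt_of_sq_le (sq_sum_le_card_mul_sum_sq.trans (le_of_eq ?_))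
  simp only [card_univ, Fintype.card_fin, sq_abs, sqnorm, dot, ← sq]

namespace Setting

namespace EventE

variable {S : Setting} (hE : S.EventE)

include hE

lemma sum_abs_w_init_le (r : Fin S.m) : ∑ k, |S.w 0 r k| ≤ 2 * S.sigma0 * S.d := by
  obtain ⟨-, -, -, hinit, -⟩ := hE
  have hd : (0 : ℝ) ≤ S.d := Nat.cast_nonneg _
  calc ∑ k, |S.w 0 r k| ≤ Real.sqrt (S.d * sqnorm (S.w 0 r)) := sum_abs_le_sqrt_mul_sqnorm _
    _ = Real.sqrt S.d * Real.sqrt (sqnorm (S.w 0 r)) := Real.sqrt_mul hd _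
    _ ≤ Real.sqrt S.d * (2 * S.sigma0 * Real.sqrt S.d) := by
        gcongr
        exact hinit r
    _ = 2 * S.sigma0 * (Real.sqrt S.d * Real.sqrt S.d) := by ring
    _ = 2 * S.sigma0 * S.d := by rw [Real.mul_self_sqrt hd]

lemma sum_abs_noise_le {i : Fin S.N} {p : Fin S.P} (hp : p ≠ S.sig i) :
    ∑ k, |S.x i p k| ≤ 2 * S.sigman * S.d := by
  have hσ := S.hsigman
  refine (sum_abs_le_sqrt_mul_sqnorm _).trans (Real.sqrt_le_iff.2 ⟨by positivity, ?_⟩)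
  calc S.d * sqnorm (S.x i p) ≤ S.d * (3 * S.sigman ^ 2 * S.d / 2) := by
        gcongr
        exact (hE.1 i p hp).2
    _ ≤ (2 * S.sigman * S.d) ^ 2 := by
        linarith [show 0 ≤ S.sigman ^ 2 * (S.d : ℝ) ^ 2 by positivity]

lemma sum_sum_abs_noise_le :
    ∑ k, ∑ i, ∑ p ∈ univ.erase (S.sig i), |S.x i p k| ≤ S.N * S.P * (2 * S.sigman * S.d) := by
  have hσ := S.hsigman
  calc ∑ k, ∑ i, ∑ p ∈ univ.erase (S.sig i), |S.x i p k|
      = ∑ i, ∑ p ∈ univ.erase (S.sig i), ∑ k, |S.x i p k| := by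
        rw [sum_comm]
        exact sum_congr rfl fun i _ => sum_comm
    _ ≤ ∑ i, ∑ p ∈ univ.erase (S.sig i), 2 * S.sigman * S.d :=
        sum_le_sum fun i _ => sum_le_sum fun p hp => hE.sum_abs_noise_le (ne_of_mem_erase hp)
    _ ≤ ∑ i : Fin S.N, ∑ _p : Fin S.P, 2 * S.sigman * S.d :=
        sum_le_sum fun i _ => sum_le_sum_of_subset_of_nonneg (erase_subset _ _) fun _ _ _ => by
          positivity
    _ = S.N * S.P * (2 * S.sigman * S.d) := by
        simp only [sum_const, card_univ, Fintype.card_fin, nsmul_eq_mul, mul_assoc]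

end EventE

lemma exists_le_wsig {S : Setting} {t : ℕ} (hF : 1 ≤ cubeSum (S.align t)) :
    ∃ r, 1 / (S.alpha * (S.m : ℝ) ^ ((1 : ℝ) / 3)) ≤ S.wsig t r := by
  have hα := S.halpha
  have hm : (0 : ℝ) < S.m := Nat.cast_pos.2 S.hm
  obtain ⟨r, hr⟩ := exists_le_of_one_le_cubeSum (μ := (S.m : ℝ) ^ ((1 : ℝ) / 3))
    (by rw [rpow_div_three_pow_three hm.le, Real.rpow_one, Fintype.card_fin]) hF
  refine ⟨r, ?_⟩
  rwa [mul_comm, ← div_div, div_le_iff₀' hα]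

namespace Admissible

variable {S : Setting} {C : ℝ} (h : S.Admissible C) {t : ℕ} (hq : S.Quiet t) {i : Fin S.N}

include h hq

lemma lloss_marg_le_of_mem_SL (hi : i ∈ S.SL) {K : ℝ} (hK0 : 0 ≤ K)
    (hK : K ≤ cubeSum (S.align t)) : lloss (S.marg t i) ≤ 2 * Real.exp (-(K / 2)) := by
  have hmarg := h.le_marg hq hi (by linarith)
  calc lloss (S.marg t i) ≤ Real.exp (-S.marg t i) := lloss_le_exp_neg _
    _ ≤ Real.exp (1 / 25 + -(K / 2)) :=
        Real.exp_le_exp.2 (by linarith [le_max_left (cubeSum (S.align t)) 0])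
    _ = Real.exp (1 / 25) * Real.exp (-(K / 2)) := Real.exp_add _ _
    _ ≤ 2 * Real.exp (-(K / 2)) := by
        gcongr
        linarith [exp_le_five_quarters le_rfl]

lemma lloss_marg_le_of_mem_SU (hi : i ∈ S.SU) : lloss (S.marg t i) ≤ 2 := by
  have hnoise := h.abs_noiseMarg_le_one_div hq i
  rw [← S.marg_of_mem_SU t hi] at hnoise
  have hexp := exp_le_five_quarters (z := -S.marg t i) (by linarith [(abs_le.1 hnoise).1])
  linarith [lloss_le_exp_neg (S.marg t i)]

lemma mean_lloss_le {K : ℝ} (hK0 : 0 ≤ K) (hK : K ≤ cubeSum (S.align t)) :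
    1 / (S.N : ℝ) * ∑ i, lloss (S.marg t i) ≤ 2 * Real.exp (-(K / 2)) + 2 / C := by
  have hN : (0 : ℝ) < S.N := Nat.cast_pos.2 S.hN
  have hC := h.C_pos
  have hSU : (#S.SU : ℝ) ≤ S.N / C := by
    rw [le_div_iff₀' hC]
    exact h.card_SU_le
  calc 1 / (S.N : ℝ) * ∑ i, lloss (S.marg t i)
      = 1 / S.N * (∑ i ∈ S.SL, lloss (S.marg t i) + ∑ i ∈ S.SU, lloss (S.marg t i)) := by
        rw [← sum_union S.hdisj, S.hunion]
    _ ≤ 1 / S.N * (#S.SL • (2 * Real.exp (-(K / 2))) + #S.SU • (2 : ℝ)) := by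
        gcongr
        · exact sum_le_card_nsmul _ _ _ fun i hi => h.lloss_marg_le_of_mem_SL hq hi hK0 hK
        · exact sum_le_card_nsmul _ _ _ fun i hi => h.lloss_marg_le_of_mem_SU hq hi
    _ ≤ 1 / S.N * (S.N * (2 * Real.exp (-(K / 2))) + S.N / C * 2) := by
        rw [nsmul_eq_mul, nsmul_eq_mul]
        gcongr
        exact (card_le_univ _).trans_eq (Fintype.card_fin _)
    _ = 2 * Real.exp (-(K / 2)) + 2 / C := by field_simp

end Admissible

namespace GoodTeacherRun

variable {S : Setting} {fT : Fin S.N → ℝ} {C : ℝ} (h : S.GoodTeacherRun fT C)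

include h

lemma signalPath_T :
    SignalPath S.align (S.signalStep fT) S.T S.alignInit (S.eta * S.alpha ^ 2) S.potentialCap :=
  h.signalPath le_rfl fun _ ht => h.quiet ht.le

lemma le_cubeSum_align {K : ℝ} (hK : 0 ≤ K) (hKC : 5 * Real.exp K ≤ C) :
    K ≤ cubeSum (S.align S.T) := by
  have hα := S.halpha
  have hσ0 := S.hsigma0
  obtain ⟨r, hr⟩ := exists_le_align_init h.event
  refine h.signalPath_T.le_cubeSum_of_long (by positivity) hr hK ?_
  linarith [h.C_le_horizon, Real.exp_pos K]

lemma abs_w_le {r : Fin S.m} {k : Fin S.d} (hk : k ≠ ⟨0, S.hd⟩) :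
    |S.w S.T r k| ≤ |S.w 0 r k| + 9 / 14 * S.noiseScale / (S.sigman ^ 2 * S.d) *
      ∑ i, ∑ p ∈ univ.erase (S.sig i), |S.x i p k| := by
  have hz : dot (e1 S.d S.hd) (Pi.single k 1) = 0 := by
    rw [e1_eq_single, dot_eq_dotProduct, dotProduct_single_one, Pi.single_eq_of_ne hk]
  have hdrift := h.abs_dot_sub_init_le le_rfl (fun t ht => h.quiet ht.le) r hz
  simp only [dot_eq_dotProduct, dotProduct_single_one] at hdrift
  linarith [abs_sub_abs_le_abs_sub (S.w S.T r k) (S.w 0 r k)]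

lemma sum_abs_w_le (r : Fin S.m) :
    ∑ k ∈ univ.erase ⟨0, S.hd⟩, |S.w S.T r k| ≤ 3 * S.sigma0 * S.d := by
  have hβ := h.noiseScale_pos
  have hσ := S.hsigman
  have hσ0 := S.hsigma0
  have hd : (0 : ℝ) < S.d := Nat.cast_pos.2 S.hd
  have hbudget : S.N * S.P * Real.sqrt (S.d * S.logNoise) ≤ S.d / 40 :=
    h.N_mul_P_mul_sqrt_le (by linarith [h.one_le_logNoise, h.logNoise_le_logHorizon])
  set c := 9 / 14 * S.noiseScale / (S.sigman ^ 2 * S.d) with hc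
  calc ∑ k ∈ univ.erase ⟨0, S.hd⟩, |S.w S.T r k|
      ≤ ∑ k ∈ univ.erase ⟨0, S.hd⟩,
          (|S.w 0 r k| + c * ∑ i, ∑ p ∈ univ.erase (S.sig i), |S.x i p k|) :=
        sum_le_sum fun k hk => h.abs_w_le (ne_of_mem_erase hk)
    _ ≤ ∑ k, (|S.w 0 r k| + c * ∑ i, ∑ p ∈ univ.erase (S.sig i), |S.x i p k|) :=
        sum_le_sum_of_subset_of_nonneg (erase_subset _ _) fun k _ _ => by positivity
    _ = ∑ k, |S.w 0 r k| + c * ∑ k, ∑ i, ∑ p ∈ univ.erase (S.sig i), |S.x i p k| := by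
        rw [sum_add_distrib, mul_sum]
    _ ≤ 2 * S.sigma0 * S.d + c * (S.N * S.P * (2 * S.sigman * S.d)) := by
        gcongr
        · exact h.event.sum_abs_w_init_le r
        · exact h.event.sum_sum_abs_noise_le
    _ = 2 * S.sigma0 * S.d +
          9 / 7 * S.sigma0 * (S.N * S.P * Real.sqrt (S.d * S.logNoise)) := by
        rw [hc, noiseScale]
        field_simp
        ring
    _ ≤ 2 * S.sigma0 * S.d + 9 / 7 * S.sigma0 * (S.d / 40) := by gcongr
    _ ≤ 3 * S.sigma0 * S.d := by linarith [mul_pos hσ0 hd]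

end GoodTeacherRun

end Setting

/-! ### Robust classification by a dominant signal -/

lemma sub_le_add_pow_three {A e β : ℝ} (hβ : 0 ≤ β) (he : |e| ≤ |A| / 30 + β) :
    A ^ 3 - |A| ^ 3 / 4 - 10 ^ 4 * β ^ 3 ≤ (A + e) ^ 3 := by
  have hA := abs_nonneg A
  have hcross : |3 * A ^ 2 * e + 3 * A * e ^ 2 + e ^ 3| ≤
      3 * |A| ^ 2 * |e| + 3 * |A| * |e| ^ 2 + |e| ^ 3 := by
    refine (abs_add_three _ _ _).trans (le_of_eq ?_)
    simp only [abs_mul, abs_pow, Nat.abs_ofNat]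
  have hmono : ∀ a b : ℝ, |A| ≤ a → |e| ≤ b →
      3 * |A| ^ 2 * |e| + 3 * |A| * |e| ^ 2 + |e| ^ 3 ≤ 3 * a ^ 2 * b + 3 * a * b ^ 2 + b ^ 3 := by
    intro a b ha hb
    have : 0 ≤ a := hA.trans ha
    have : 0 ≤ b := (abs_nonneg e).trans hb
    gcongr
  have hbound : 3 * |A| ^ 2 * |e| + 3 * |A| * |e| ^ 2 + |e| ^ 3 ≤
      |A| ^ 3 / 4 + 10 ^ 4 * β ^ 3 := by
    have hA3 : 0 ≤ |A| ^ 3 := pow_nonneg hA 3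
    have hβ3 : 0 ≤ β ^ 3 := pow_nonneg hβ 3
    rcases le_total β (|A| / 30) with hβA | hβA
    · linarith [hmono |A| (|A| / 15) le_rfl (by linarith)]
    · linarith [hmono (30 * β) (2 * β) (by linarith) (by linarith)]
  linarith [neg_abs_le (3 * A ^ 2 * e + 3 * A * e ^ 2 + e ^ 3)]

lemma add_add_pow_three_le {a b c : ℝ} (ha : 0 ≤ a) (hb : 0 ≤ b) (hc : 0 ≤ c) :
    (a + b + c) ^ 3 ≤ 9 * (a ^ 3 + b ^ 3 + c ^ 3) := by
  simpa [Fin.sum_univ_three, show (3 : ℝ) ^ 2 = 9 by norm_num] using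
    pow_sum_le_card_mul_sum_pow (s := univ) (f := ![a, b, c])
      (by simp [Fin.forall_fin_succ, ha, hb, hc]) 2

lemma sum_pow_three_le_pow_three_sum {ι : Type*} {s : Finset ι} {f : ι → ℝ}
    (hf : ∀ i ∈ s, 0 ≤ f i) : ∑ i ∈ s, f i ^ 3 ≤ (∑ i ∈ s, f i) ^ 3 := by
  calc ∑ i ∈ s, f i ^ 3 ≤ ∑ i ∈ s, (∑ j ∈ s, f j) ^ 2 * f i :=
        sum_le_sum fun i hi => by
          rw [pow_succ]
          exact mul_le_mul_of_nonneg_right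
            (pow_le_pow_left₀ (hf i hi) (single_le_sum hf hi) 2) (hf i hi)
    _ = (∑ i ∈ s, f i) ^ 3 := by rw [← mul_sum, ← pow_succ]

section DominantSignal

variable {ι : Type*} [Fintype ι] {z D : ι → ℝ} {s : ι} {A y κ β : ℝ}

lemma sub_le_mul_pow_three (hy : y = 1 ∨ y = -1) (hβ : 0 ≤ β)
    {x : ℝ} (hx : |y * x - A| ≤ |A| / 30 + β) :
    A ^ 3 - |A| ^ 3 / 4 - 10 ^ 4 * β ^ 3 ≤ y * x ^ 3 :=
  calc A ^ 3 - |A| ^ 3 / 4 - 10 ^ 4 * β ^ 3 ≤ (A + (y * x - A)) ^ 3 := sub_le_add_pow_three hβ hx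
    _ = y * x ^ 3 := by
        rcases hy with rfl | rfl
        · ring
        · ring

lemma abs_sum_erase_pow_three_le [DecidableEq ι] (hD : ∀ p, 0 ≤ D p) (hκ : 0 ≤ κ) (hβ : 0 ≤ β)
    (hz : ∀ p ≠ s, |z p| ≤ D p + κ * |A| + β) :
    |∑ p ∈ univ.erase s, z p ^ 3| ≤ ∑ p, 9 * (D p ^ 3 + (κ * |A|) ^ 3 + β ^ 3) :=
  calc |∑ p ∈ univ.erase s, z p ^ 3| ≤ ∑ p ∈ univ.erase s, |z p ^ 3| := abs_sum_le_sum_abs _ _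
    _ ≤ ∑ p ∈ univ.erase s, 9 * (D p ^ 3 + (κ * |A|) ^ 3 + β ^ 3) := by
        refine sum_le_sum fun p hp => ?_
        rw [abs_pow]
        exact (pow_le_pow_left₀ (abs_nonneg _) (hz p (ne_of_mem_erase hp)) 3).trans
          (add_add_pow_three_le (hD p) (by positivity) hβ)
    _ ≤ ∑ p, 9 * (D p ^ 3 + (κ * |A|) ^ 3 + β ^ 3) :=
        sum_le_sum_of_subset_of_nonneg (erase_subset _ _) fun p _ _ => by
          have := hD p
          positivity

lemma sub_le_mul_sum_pow_three (hy : y = 1 ∨ y = -1) (hD : ∀ p, 0 ≤ D p) (hκ : 0 ≤ κ)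
    (hβ : 0 ≤ β) (hs : |y * z s - A| ≤ |A| / 30 + β)
    (hz : ∀ p ≠ s, |z p| ≤ D p + κ * |A| + β) :
    A ^ 3 - |A| ^ 3 / 4 - 10 ^ 4 * β ^ 3 - ∑ p, 9 * (D p ^ 3 + (κ * |A|) ^ 3 + β ^ 3) ≤
      y * ∑ p, z p ^ 3 := by
  classical
  have hyabs : |y| = 1 := by
    rcases hy with rfl | rfl
    · exact abs_one
    · rw [abs_neg, abs_one]
  have hsignal := sub_le_mul_pow_three hy hβ hs
  have hnoise : |y * ∑ p ∈ univ.erase s, z p ^ 3| ≤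
      ∑ p, 9 * (D p ^ 3 + (κ * |A|) ^ 3 + β ^ 3) := by
    rw [abs_mul, hyabs, one_mul]
    exact abs_sum_erase_pow_three_le hD hκ hβ hz
  rw [← add_sum_erase _ (fun p => z p ^ 3) (mem_univ s), mul_add]
  linarith [(abs_le.1 hnoise).1]

end DominantSignal

theorem mul_netOut_nonneg {m P d : ℕ} {w : Fin m → Fin d → ℝ} {X : Fin P → Fin d → ℝ} {s : Fin P}
    {A : Fin m → ℝ} {D : Fin m → Fin P → ℝ} {y κ β : ℝ} (hy : y = 1 ∨ y = -1)
    (hD : ∀ r p, 0 ≤ D r p) (hκ : 0 ≤ κ) (hβ : 0 ≤ β)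
    (hs : ∀ r, |y * dot (w r) (X s) - A r| ≤ |A r| / 30 + β)
    (hX : ∀ r, ∀ p ≠ s, |dot (w r) (X p)| ≤ D r p + κ * |A r| + β)
    (hPκ : 9 * P * κ ^ 3 ≤ 1 / 100) (hmβ : m * (10 ^ 4 + 9 * P) * β ^ 3 ≤ 1 / 100)
    (hDsum : ∑ r, ∑ p, D r p ≤ 1 / 10) (hF : 1 ≤ cubeSum A)
    (hA : ∑ r, |A r| ^ 3 ≤ cubeSum A + 1 / 50) : 0 ≤ y * netOut w X := by
  have hA0 : 0 ≤ ∑ r, |A r| ^ 3 := sum_nonneg fun _ _ => by positivity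
  have hD3 : ∑ r, ∑ p, D r p ^ 3 ≤ (1 / 10) ^ 3 :=
    calc ∑ r, ∑ p, D r p ^ 3 ≤ ∑ r, (∑ p, D r p) ^ 3 :=
          sum_le_sum fun r _ => sum_pow_three_le_pow_three_sum fun p _ => hD r p
      _ ≤ (∑ r, ∑ p, D r p) ^ 3 :=
          sum_pow_three_le_pow_three_sum fun r _ => sum_nonneg fun p _ => hD r p
      _ ≤ (1 / 10) ^ 3 :=
          pow_le_pow_left₀ (sum_nonneg fun r _ => sum_nonneg fun p _ => hD r p) hDsum 3
  calc (0 : ℝ) ≤ cubeSum A - (1 / 4 + 9 * P * κ ^ 3) * ∑ r, |A r| ^ 3 -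
        m * (10 ^ 4 + 9 * P) * β ^ 3 - 9 * ∑ r, ∑ p, D r p ^ 3 := by
        linarith [mul_le_mul_of_nonneg_right hPκ hA0]
    _ = ∑ r, (A r ^ 3 - |A r| ^ 3 / 4 - 10 ^ 4 * β ^ 3 -
        ∑ p, 9 * (D r p ^ 3 + (κ * |A r|) ^ 3 + β ^ 3)) := by
        simp only [cubeSum, mul_pow, sum_sub_distrib, sum_add_distrib, ← mul_sum, sum_const,
          card_univ, Fintype.card_fin, nsmul_eq_mul, ← sum_div]
        ring
    _ ≤ ∑ r, y * ∑ p, dot (w r) (X p) ^ 3 :=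
        sum_le_sum fun r _ => sub_le_mul_sum_pow_three hy (hD r) hκ hβ (hs r) (hX r)
    _ = y * netOut w X := by rw [netOut_eq_sum_cube, mul_sum]

/-! ### The learnable test distribution -/

section TestLaw

instance instIsProbabilityMeasureNoiseCoordLaw (σ : ℝ) (d : ℕ) (k : Fin d) :
    IsProbabilityMeasure (noiseCoordLaw σ d k) := by
  unfold noiseCoordLaw
  split_ifs
  · exact Measure.dirac.isProbabilityMeasure
  · exact instIsProbabilityMeasureGaussianReal 0 _

instance instIsProbabilityMeasureNoisePatchLaw (σ : ℝ) (d : ℕ) :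
    IsProbabilityMeasure (noisePatchLaw σ d) :=
  inferInstanceAs (IsProbabilityMeasure (Measure.pi (noiseCoordLaw σ d)))

instance instIsProbabilityMeasureUniformPatch (P : ℕ) (hP : 0 < P) :
    IsProbabilityMeasure (uniformPatch P hP) := by
  unfold uniformPatch
  infer_instance

instance instIsProbabilityMeasureLabelLaw : IsProbabilityMeasure labelLaw where
  measure_univ := by simp [labelLaw, ENNReal.inv_two_add_inv_two]

lemma lintegral_enorm_gaussianReal_le (v : ℝ≥0) :
    ∫⁻ x, ‖x‖ₑ ∂(gaussianReal 0 v) ≤ ENNReal.ofReal (Real.sqrt v) := by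
  have hvar : eLpNorm id 2 (gaussianReal 0 v) = ENNReal.ofReal (Real.sqrt v) := by
    rw [(memLp_id_gaussianReal 2).eLpNorm_eq_integral_rpow_norm two_ne_zero ENNReal.ofNat_ne_top]
    have := variance_eq_integral (X := id) (μ := gaussianReal 0 v) aemeasurable_id
    rw [variance_id_gaussianReal] at this
    simp only [id, integral_id_gaussianReal, sub_zero] at this
    simp [← this, Real.sqrt_eq_rpow]
  calc ∫⁻ x, ‖x‖ₑ ∂(gaussianReal 0 v) = eLpNorm id 1 (gaussianReal 0 v) := by
        rw [eLpNorm_one_eq_lintegral_enorm]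
        rfl
    _ ≤ eLpNorm id 2 (gaussianReal 0 v) :=
        eLpNorm_le_eLpNorm_of_exponent_le one_le_two aestronglyMeasurable_id
    _ = ENNReal.ofReal (Real.sqrt v) := hvar

lemma lintegral_enorm_noiseCoordLaw_le {σ : ℝ} (hσ : 0 ≤ σ) {d : ℕ} (k : Fin d) :
    ∫⁻ x, ‖x‖ₑ ∂(noiseCoordLaw σ d k) ≤ ENNReal.ofReal σ := by
  unfold noiseCoordLaw
  split_ifs
  · simp
  · exact (lintegral_enorm_gaussianReal_le _).trans_eq
      (congr_arg ENNReal.ofReal (Real.sqrt_sq hσ))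

lemma lintegral_enorm_noiseCoordLaw_zero (σ : ℝ) {d : ℕ} (hd : 0 < d) :
    ∫⁻ x, ‖x‖ₑ ∂(noiseCoordLaw σ d ⟨0, hd⟩) = 0 := by
  simp [noiseCoordLaw]

lemma lintegral_enorm_coord (σ : ℝ) {P d : ℕ} (p : Fin P) (k : Fin d) :
    ∫⁻ ξ : Fin P → Fin d → ℝ, ‖ξ p k‖ₑ ∂(Measure.pi fun _ => noisePatchLaw σ d) =
      ∫⁻ x, ‖x‖ₑ ∂(noiseCoordLaw σ d k) :=
  ((measurePreserving_eval (noiseCoordLaw σ d) k).comp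
    (measurePreserving_eval (fun _ : Fin P => noisePatchLaw σ d) p)).lintegral_comp
      measurable_enorm

lemma lintegral_sum_enorm_mul_le {σ L : ℝ} (hσ : 0 ≤ σ) {P d : ℕ} (hd : 0 < d) {a : Fin d → ℝ}
    (ha : ∑ k ∈ univ.erase ⟨0, hd⟩, |a k| ≤ L) (p : Fin P) :
    ∫⁻ ξ : Fin P → Fin d → ℝ, ∑ k, ‖a k‖ₑ * ‖ξ p k‖ₑ ∂(Measure.pi fun _ => noisePatchLaw σ d) ≤
      ENNReal.ofReal (L * σ) := by
  calc ∫⁻ ξ : Fin P → Fin d → ℝ, ∑ k, ‖a k‖ₑ * ‖ξ p k‖ₑ ∂(Measure.pi fun _ => noisePatchLaw σ d)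
      = ∑ k, ‖a k‖ₑ * ∫⁻ x, ‖x‖ₑ ∂(noiseCoordLaw σ d k) := by
        rw [lintegral_finsetSum _ fun k _ => by fun_prop]
        refine sum_congr rfl fun k _ => ?_
        rw [lintegral_const_mul _ (by fun_prop), lintegral_enorm_coord]
    _ = ∑ k ∈ univ.erase ⟨0, hd⟩, ‖a k‖ₑ * ∫⁻ x, ‖x‖ₑ ∂(noiseCoordLaw σ d k) := by
        rw [← add_sum_erase _ _ (mem_univ ⟨0, hd⟩), lintegral_enorm_noiseCoordLaw_zero, mul_zero,
          zero_add]
    _ ≤ ∑ k ∈ univ.erase ⟨0, hd⟩, ‖a k‖ₑ * ENNReal.ofReal σ := by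
        gcongr with k
        exact lintegral_enorm_noiseCoordLaw_le hσ k
    _ = ENNReal.ofReal ((∑ k ∈ univ.erase ⟨0, hd⟩, |a k|) * σ) := by
        rw [ENNReal.ofReal_mul' hσ, ENNReal.ofReal_sum_of_nonneg fun _ _ => abs_nonneg _, sum_mul]
        simp only [Real.enorm_eq_ofReal_abs]
    _ ≤ ENNReal.ofReal (L * σ) := by gcongr

/-- The total `ℓ¹` bound `∑ r, ∑ p, ∑ k, |w_{r,k}| |ξ_{p,k}|` on the responses of the filters `w` to
the noise patches `ξ`. -/
def noiseResponse {m P d : ℕ} (w : Fin m → Fin d → ℝ) (ξ : Fin P → Fin d → ℝ) : ℝ :=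
  ∑ r, ∑ p, ∑ k, |w r k| * |ξ p k|

lemma enorm_noiseResponse {m P d : ℕ} (w : Fin m → Fin d → ℝ) (ξ : Fin P → Fin d → ℝ) :
    ‖noiseResponse w ξ‖ₑ = ∑ r, ∑ p, ∑ k, ‖w r k‖ₑ * ‖ξ p k‖ₑ := by
  have h0 : ∀ r p, 0 ≤ ∑ k, |w r k| * |ξ p k| := fun r p => sum_nonneg fun k _ => by positivity
  rw [noiseResponse,
    Real.enorm_of_nonneg (sum_nonneg fun r _ => sum_nonneg fun p _ => h0 r p),
    ENNReal.ofReal_sum_of_nonneg fun r _ => sum_nonneg fun p _ => h0 r p]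
  refine sum_congr rfl fun r _ => ?_
  rw [ENNReal.ofReal_sum_of_nonneg fun p _ => h0 r p]
  refine sum_congr rfl fun p _ => ?_
  rw [ENNReal.ofReal_sum_of_nonneg fun k _ => by positivity]
  refine sum_congr rfl fun k _ => ?_
  rw [ENNReal.ofReal_mul (abs_nonneg _), Real.enorm_eq_ofReal_abs, Real.enorm_eq_ofReal_abs]

lemma lintegral_enorm_noiseResponse_le {σ L : ℝ} (hσ : 0 ≤ σ) {m P d : ℕ} (hd : 0 < d)
    {w : Fin m → Fin d → ℝ} (hw : ∀ r, ∑ k ∈ univ.erase ⟨0, hd⟩, |w r k| ≤ L) :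
    ∫⁻ ξ : Fin P → Fin d → ℝ, ‖noiseResponse w ξ‖ₑ ∂(Measure.pi fun _ => noisePatchLaw σ d) ≤
      ENNReal.ofReal (m * P * (L * σ)) := by
  simp only [enorm_noiseResponse]
  rw [lintegral_finsetSum _ fun r _ => by fun_prop]
  calc ∑ r, ∫⁻ ξ : Fin P → Fin d → ℝ, ∑ p, ∑ k, ‖w r k‖ₑ * ‖ξ p k‖ₑ
        ∂(Measure.pi fun _ => noisePatchLaw σ d)
      ≤ ∑ _r : Fin m, ∑ _p : Fin P, ENNReal.ofReal (L * σ) := by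
        refine sum_le_sum fun r _ => ?_
        rw [lintegral_finsetSum _ fun p _ => by fun_prop]
        exact sum_le_sum fun p _ => lintegral_sum_enorm_mul_le hσ hd (hw r) p
    _ = ENNReal.ofReal (m * P * (L * σ)) := by
        rw [mul_assoc, ENNReal.ofReal_mul (Nat.cast_nonneg m),
          ENNReal.ofReal_mul (Nat.cast_nonneg P)]
        simp only [sum_const, card_univ, Fintype.card_fin, nsmul_eq_mul, ENNReal.ofReal_natCast]

lemma measure_lt_noiseResponse_le {σ L : ℝ} (hσ : 0 ≤ σ) {m P d : ℕ} (hd : 0 < d)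
    {w : Fin m → Fin d → ℝ} (hw : ∀ r, ∑ k ∈ univ.erase ⟨0, hd⟩, |w r k| ≤ L) {c : ℝ}
    (hc : 0 < c) :
    (Measure.pi fun _ : Fin P => noisePatchLaw σ d) {ξ | c < noiseResponse w ξ} ≤
      ENNReal.ofReal (m * P * (L * σ) / c) := by
  have hmeas : Measurable fun ξ : Fin P → Fin d → ℝ => ‖noiseResponse w ξ‖ₑ := by
    unfold noiseResponse
    fun_prop
  calc (Measure.pi fun _ : Fin P => noisePatchLaw σ d) {ξ | c < noiseResponse w ξ}
      ≤ (Measure.pi fun _ => noisePatchLaw σ d) {ξ | ENNReal.ofReal c ≤ ‖noiseResponse w ξ‖ₑ} :=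
        measure_mono fun ξ hξ => by
          rw [Set.mem_ofPred_eq, Real.enorm_eq_ofReal_abs]
          exact ENNReal.ofReal_le_ofReal ((le_of_lt hξ).trans (le_abs_self _))
    _ ≤ (∫⁻ ξ, ‖noiseResponse w ξ‖ₑ ∂(Measure.pi fun _ => noisePatchLaw σ d)) /
        ENNReal.ofReal c :=
        meas_ge_le_lintegral_div hmeas.aemeasurable (ENNReal.ofReal_pos.2 hc).ne'
          ENNReal.ofReal_ne_top
    _ ≤ ENNReal.ofReal (m * P * (L * σ)) / ENNReal.ofReal c := by
        gcongr
        exact lintegral_enorm_noiseResponse_le hσ hd hw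
    _ = ENNReal.ofReal (m * P * (L * σ) / c) := (ENNReal.ofReal_div_of_pos hc).symm

lemma continuous_netOut {m P d : ℕ} (w : Fin m → Fin d → ℝ) :
    Continuous fun X : Fin P → Fin d → ℝ => netOut w X := by
  simp only [netOut_eq_sum_cube, dot]
  fun_prop

lemma isOpen_setOf_misclassified {m P d : ℕ} (w : Fin m → Fin d → ℝ) (ε : ℝ) :
    IsOpen {Xy : (Fin P → Fin d → ℝ) × ℝ | ∃ Δ : Fin P → Fin d → ℝ, (∀ p k, |Δ p k| ≤ ε) ∧
      Xy.2 * netOut w (fun p => Xy.1 p + Δ p) < 0} := by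
  simp only [Set.ofPred_exists, Set.ofPred_and]
  refine isOpen_iUnion fun Δ => isOpen_const.inter (isOpen_lt ?_ continuous_const)
  exact continuous_snd.mul ((continuous_netOut w).comp (by fun_prop))

lemma measurable_update_signal {P d : ℕ} (v : ℝ → Fin d → ℝ) (hv : Measurable v) :
    Measurable fun z : ℝ × Fin P × (Fin P → Fin d → ℝ) =>
      (Function.update z.2.2 z.2.1 (v z.1), z.1) := by
  refine Measurable.prodMk (measurable_pi_lambda _ fun p => ?_) measurable_fst
  simp only [Function.update_apply]
  exact Measurable.ite (measurableSet_eq_fun measurable_const (by fun_prop)) (by fun_prop)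
    (by fun_prop)

lemma labelLaw_compl : labelLaw ({1, -1}ᶜ : Set ℝ) = 0 := by
  have hmeas : MeasurableSet ({1, -1}ᶜ : Set ℝ) := (Set.toFinite _).measurableSet.compl
  simp [labelLaw, hmeas]

theorem Setting.robErr_le (S : Setting) (t : ℕ) {B : Set (Fin S.P → Fin S.d → ℝ)}
    (hB : ∀ ξ ∉ B, ∀ (s : Fin S.P) (y : ℝ), y = 1 ∨ y = -1 →
      ∀ Δ : Fin S.P → Fin S.d → ℝ, (∀ p k, |Δ p k| ≤ S.eps) →
        0 ≤ y * netOut (S.w t)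
          (fun p => Function.update ξ s ((S.alpha * y) • e1 S.d S.hd) p + Δ p)) :
    S.robErr t ≤ (Measure.pi fun _ : Fin S.P => noisePatchLaw S.sigman S.d) B := by
  have hmap := measurable_update_signal (P := S.P)
    (fun y : ℝ => (S.alpha * y) • e1 S.d S.hd) (by fun_prop)
  have hopen := isOpen_setOf_misclassified (P := S.P) (S.w t) S.eps
  refine (Measure.map_apply hmap hopen.measurableSet).trans_le ?_
  calc _ ≤ (labelLaw.prod ((uniformPatch S.P S.hP).prod
        (Measure.pi fun _ => noisePatchLaw S.sigman S.d)))
          (({1, -1}ᶜ : Set ℝ) ×ˢ Set.univ ∪ Set.univ ×ˢ (Set.univ ×ˢ B)) := by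
        refine measure_mono ?_
        rintro ⟨y, s, ξ⟩ ⟨Δ, hΔ, hlt⟩
        by_contra hgood
        simp only [Set.mem_union, Set.mem_prod, Set.mem_compl_iff, Set.mem_insert_iff,
          Set.mem_singleton_iff, Set.mem_univ, and_true, true_and, not_or, not_and_or,
          not_not] at hgood
        exact absurd hlt (not_lt.2 (hB ξ hgood.2 s y hgood.1 Δ hΔ))
    _ ≤ _ := measure_union_le _ _
    _ = (Measure.pi fun _ => noisePatchLaw S.sigman S.d) B := by
        simp only [Measure.prod_prod, labelLaw_compl, measure_univ, zero_mul, one_mul, zero_add]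

end TestLaw

/-! ### Robust error of the trained student -/

lemma abs_dot_le {d : ℕ} (a z : Fin d → ℝ) : |dot a z| ≤ ∑ k, |a k| * |z k| := by
  simp only [← abs_mul]
  exact abs_sum_le_sum_abs _ _

namespace Setting

namespace Admissible

variable {S : Setting} {C : ℝ} (h : S.Admissible C)

include h

lemma nine_mul_P_mul_le : 9 * S.P * (1 / C) ^ 3 ≤ 1 / 100 := by
  have hC := h.C_pos
  calc 9 * S.P * (1 / C) ^ 3 ≤ 9 * C * (1 / C) ^ 3 := by
        gcongr
        exact h.patches_le
    _ = 9 / C / C := by field_simp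
    _ ≤ 9 / 10 ^ 6 / 10 ^ 6 := by
        gcongr
        · exact h.C_ge
        · exact h.C_ge
    _ ≤ 1 / 100 := by norm_num

lemma m_mul_perturbation_le :
    S.m * (10 ^ 4 + 9 * S.P) * (S.eps * (3 * S.sigma0 * S.d)) ^ 3 ≤ 1 / 100 := by
  have hσ0 := S.hsigma0
  have hε := S.heps
  have hC := h.C_ge
  set β := S.eps * (3 * S.sigma0 * S.d) with hβ
  have hβ0 : 0 ≤ β := by positivity
  have hmβ : C * (S.m * β) ≤ 3 := by
    rw [hβ]
    linarith [h.C_mul_eps_sigma0_le]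
  have hβm : β ≤ S.m * β := le_mul_of_one_le_left hβ0 S.one_le_m
  have hsmall : β ≤ 1 / 1000 := by
    linarith [mul_le_mul_of_nonneg_right hC (hβ0.trans hβm)]
  calc S.m * (10 ^ 4 + 9 * S.P) * β ^ 3 = S.m * β * (10 ^ 4 + 9 * S.P) * β ^ 2 := by ring
    _ ≤ S.m * β * (10 * C) * (1 / 1000) ^ 2 := by
        gcongr
        linarith [h.patches_le]
    _ = C * (S.m * β) / 10 ^ 5 := by ring
    _ ≤ 1 / 100 := by linarith

end Admissible

namespace GoodTeacherRun

variable {S : Setting} {fT : Fin S.N → ℝ} {C : ℝ} (h : S.GoodTeacherRun fT C)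

include h

lemma abs_dot_perturbation_le (r : Fin S.m) {δ : Fin S.d → ℝ} (hδ : ∀ k, |δ k| ≤ S.eps) :
    |dot (S.w S.T r) δ| ≤ 1 / C * |S.align S.T r| + S.eps * (3 * S.sigma0 * S.d) := by
  have hε := S.heps
  have hC := h.C_pos
  calc |dot (S.w S.T r) δ| ≤ ∑ k, |S.w S.T r k| * |δ k| := abs_dot_le _ _
    _ ≤ ∑ k, |S.w S.T r k| * S.eps := by
        gcongr with k
        exact hδ k
    _ = S.eps * |S.wsig S.T r| + S.eps * ∑ k ∈ univ.erase ⟨0, S.hd⟩, |S.w S.T r k| := by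
        rw [← sum_mul, ← add_sum_erase _ _ (mem_univ ⟨0, S.hd⟩), wsig]
        ring
    _ ≤ S.alpha / C * |S.wsig S.T r| + S.eps * (3 * S.sigma0 * S.d) := by
        gcongr
        · rw [le_div_iff₀' hC]
          exact h.C_mul_eps_le
        · exact h.sum_abs_w_le r
    _ = 1 / C * |S.align S.T r| + S.eps * (3 * S.sigma0 * S.d) := by
        rw [align, abs_mul, abs_of_pos S.halpha]
        ring

lemma mul_netOut_update_nonneg (hF : 1 ≤ cubeSum (S.align S.T)) {ξ : Fin S.P → Fin S.d → ℝ}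
    (hξ : noiseResponse (S.w S.T) ξ ≤ 1 / 10) (s : Fin S.P) {y : ℝ} (hy : y = 1 ∨ y = -1)
    {Δ : Fin S.P → Fin S.d → ℝ} (hΔ : ∀ p k, |Δ p k| ≤ S.eps) :
    0 ≤ y * netOut (S.w S.T)
      (fun p => Function.update ξ s ((S.alpha * y) • e1 S.d S.hd) p + Δ p) := by
  have hσ0 := S.hsigma0
  have hε := S.heps
  have hC := h.C_pos
  have hy1 : |y| = 1 ∧ y * y = 1 := by rcases hy with rfl | rfl <;> norm_num
  have hpert := fun r p => h.abs_dot_perturbation_le r (hΔ p)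
  refine mul_netOut_nonneg (s := s) (A := S.align S.T) (κ := 1 / C)
    (D := fun r p => ∑ k, |S.w S.T r k| * |ξ p k|) (β := S.eps * (3 * S.sigma0 * S.d)) hy
    (fun r p => by positivity) (by positivity) (by positivity) (fun r => ?_) (fun r p hp => ?_)
    h.nine_mul_P_mul_le h.m_mul_perturbation_le hξ hF
    (h.signalPath_T.sum_abs_le le_rfl)
  · have hresidual : y * dot (S.w S.T r) ((S.alpha * y) • e1 S.d S.hd + Δ s) - S.align S.T r =
        y * dot (S.w S.T r) (Δ s) := by
      rw [dot_add_right, dot_smul_e1, align, wsig]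
      linear_combination S.alpha * S.w S.T r ⟨0, S.hd⟩ * hy1.2
    rw [Function.update_self, hresidual, abs_mul, hy1.1, one_mul]
    refine (hpert r s).trans (add_le_add_left ?_ _)
    rw [div_mul_eq_mul_div, one_mul]
    exact div_le_div_of_nonneg_left (abs_nonneg _) (by norm_num) (by linarith [h.C_ge])
  · rw [Function.update_of_ne hp, dot_add_right, add_assoc]
    exact (abs_add_le _ _).trans (add_le_add (abs_dot_le _ _) (hpert r p))

theorem robErr_le (hF : 1 ≤ cubeSum (S.align S.T)) :
    S.robErr S.T ≤ ENNReal.ofReal (60 / C) :=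
  calc S.robErr S.T
      ≤ (Measure.pi fun _ : Fin S.P => noisePatchLaw S.sigman S.d)
          {ξ | 1 / 10 < noiseResponse (S.w S.T) ξ} :=
        S.robErr_le S.T fun _ hξ s _ hy _ hΔ =>
          h.mul_netOut_update_nonneg hF (not_lt.1 hξ) s hy hΔ
    _ ≤ ENNReal.ofReal (S.m * S.P * (3 * S.sigma0 * S.d * S.sigman) / (1 / 10)) :=
        measure_lt_noiseResponse_le S.hsigman.le S.hd h.sum_abs_w_le (by norm_num)
    _ ≤ ENNReal.ofReal (60 / C) := by
        refine ENNReal.ofReal_le_ofReal ?_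
        rw [le_div_iff₀ h.C_pos]
        linarith [h.test_le]

end GoodTeacherRun

end Setting

lemma exists_constants {θ : ℝ} (hθ : 0 < θ) :
    ∃ K C : ℝ, 1 ≤ K ∧ 10 ^ 6 ≤ C ∧ 5 * Real.exp K ≤ C ∧
      2 * Real.exp (-(K / 2)) + 2 / C ≤ θ ∧ 60 / C ≤ θ := by
  set K : ℝ := max 1 (2 * Real.log (4 / θ))
  set C : ℝ := 10 ^ 6 + 5 * Real.exp K + 60 / θ
  have hexp : 0 < Real.exp K := Real.exp_pos K
  have hθ60 : 0 < 60 / θ := by positivity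
  have hKθ : Real.exp (-(K / 2)) ≤ θ / 4 := by
    rw [← inv_div 4 θ, ← Real.exp_log (inv_pos.2 (div_pos four_pos hθ)), Real.log_inv]
    exact Real.exp_le_exp.2 (by linarith [le_max_right 1 (2 * Real.log (4 / θ))])
  have hCθ : 60 / C ≤ θ := by
    rw [div_le_comm₀ (by linarith) hθ]
    linarith
  refine ⟨K, C, le_max_left _ _, by linarith, by linarith, ?_, hCθ⟩
  linarith [show 2 / C = 60 / C / 30 by ring]

/-- Adversarial distillation under a Good Teacher. On the event `E`,
under Condition (H) in the sparse-unlearnable regime with teacher margin `Γ ≥ C d` on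
learnable samples and zero margin on unlearnable samples (a Good Teacher), for any
horizon `T` with `T₀ + m^{2/3} log T_max/(η α²) ≤ T ≤ T_max`: (1) some filter aligns
with the learnable feature; (2) every noise response remains at initialization scale;
(3) the robust training error is `o(1)`; (4) the robust test error on the learnable
test distribution is `o(1)`. -/
theorem stmt19 :
    ∃ C0 : ℝ, 0 < C0 ∧
      ∀ θ : ℝ, 0 < θ →
        ∃ C : ℝ, 0 < C ∧
          ∀ (S : Setting) (fT : Fin S.N → ℝ) (Γ : ℝ),
            S.ADDyn fT → S.EventE → S.CondH C → S.SparseRegime C →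
            C * S.d ≤ Γ →
            (∀ i ∈ S.SL, Γ ≤ S.y i * fT i) →
            (∀ i ∈ S.SU, S.y i * fT i = 0) →
            (S.T0 C0 : ℝ) + (S.m : ℝ) ^ ((2 : ℝ) / 3) * Real.log S.Tmax /
                (S.eta * S.alpha ^ 2) ≤ (S.T : ℝ) →
            (S.T : ℝ) ≤ S.Tmax →
            (∃ r, C0 / (S.alpha * (S.m : ℝ) ^ ((1 : ℝ) / 3)) ≤ S.wsig S.T r) ∧
            (∀ (r : Fin S.m) (i : Fin S.N) (j : Fin S.P), j ≠ S.sig i →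
              |dot (S.w S.T r) (S.x i j)| ≤
                4 * S.sigma0 * S.sigman *
                  Real.sqrt ((S.d : ℝ) * Real.log ((16 : ℝ) * S.N * S.m * S.P / S.delta))) ∧
            1 / (S.N : ℝ) * ∑ i, lloss (S.marg S.T i) ≤ θ ∧
            S.robErr S.T ≤ ENNReal.ofReal θ := by
  refine ⟨1, one_pos, fun θ hθ => ?_⟩
  obtain ⟨K, C, hK, hC, hKC, htrain, htest⟩ := exists_constants hθ
  refine ⟨C, by linarith, fun S fT Γ hdyn hE hH hsparse hΓ hSL hSU _ hT => ?_⟩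
  have hrun : S.GoodTeacherRun fT C :=
    ⟨⟨hC, hH, hsparse, hT⟩, hdyn, hE, fun i hi => hΓ.trans (hSL i hi), hSU⟩
  have hquiet : S.Quiet S.T := hrun.quiet le_rfl
  have hF : K ≤ cubeSum (S.align S.T) := hrun.le_cubeSum_align (by linarith) hKC
  refine ⟨Setting.exists_le_wsig (hK.trans hF), fun r i j hj => ?_,
    (hrun.mean_lloss_le hquiet (by linarith) hF).trans htrain,
    (hrun.robErr_le (hK.trans hF)).trans (ENNReal.ofReal_le_ofReal htest)⟩
  have hscale := hrun.noiseScale_pos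
  calc |dot (S.w S.T r) (S.x i j)| ≤ 3 * S.noiseScale := hquiet r i j hj
    _ ≤ 4 * S.noiseScale := by linarith
    _ = _ := by rw [Setting.noiseScale, Setting.logNoise]; ring

end AD

end
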